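/- For every open bounded convex set Ω ⊂ ℝ^N and every open ball B ⊂ ℝ^N one has the strict inequality μ_p(Ω) < λ_p(B) · (|B|/|Ω|)^{p/N}. -/

import Mathlib

open MeasureTheory Metric Set Real

noncomputable section

/-- The Rayleigh quotient `(∫_Ω |∇v|^p) / (∫_Ω |v|^q)^(p/q)`, where the gradient is
understood as the (a.e. defined) Fréchet derivative. -/
def rayleighQuot {N : ℕ} (p q : ℝ) (Ω : Set (EuclideanSpace ℝ (Fin N)))
    (v : EuclideanSpace ℝ (Fin N) → ℝ) : ℝ :=
  (∫ x in Ω, ‖fderiv ℝ v x‖ ^ p) / (∫ x in Ω, |v x| ^ q) ^ (p / q)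

/-- The first (generalized) Dirichlet eigenvalue `λ_{p,q}(Ω)`: infimum of the Rayleigh
quotient over nontrivial smooth functions compactly supported in `Ω`. -/
def lambdaPQ {N : ℕ} (p q : ℝ) (Ω : Set (EuclideanSpace ℝ (Fin N))) : ℝ :=
  sInf { R : ℝ | ∃ v : EuclideanSpace ℝ (Fin N) → ℝ,
    ContDiff ℝ (⊤ : ℕ∞) v ∧ HasCompactSupport v ∧ tsupport v ⊆ Ω ∧
    (∃ x ∈ Ω, v x ≠ 0) ∧ R = rayleighQuot p q Ω v }

/-- The first nontrivial (generalized) Neumann eigenvalue `μ_{p,q}(Ω)`: infimum of the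
Rayleigh quotient over nontrivial Lipschitz functions on the closure of `Ω` satisfying
the constraint `∫_Ω |v|^(q-2) v = 0`. -/
def muPQ {N : ℕ} (p q : ℝ) (Ω : Set (EuclideanSpace ℝ (Fin N))) : ℝ :=
  sInf { R : ℝ | ∃ v : EuclideanSpace ℝ (Fin N) → ℝ, ∃ K : NNReal,
    LipschitzOnWith K v (closure Ω) ∧ (∃ x ∈ Ω, v x ≠ 0) ∧
    (∫ x in Ω, |v x| ^ (q - 2) * v x) = 0 ∧ R = rayleighQuot p q Ω v }

/-- `q` is below the critical Sobolev exponent `p* = Np/(N-p)` (with `p* = ∞` if `p ≥ N`). -/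
def ltCritical (N : ℕ) (p q : ℝ) : Prop := p < N → q < N * p / (N - p)

end


def isoD {n : ℕ} (A : Set (Fin (n+1) → ℝ)) (d : ℝ) : Prop :=
  ∀ x ∈ A, ∀ y ∈ A, ∑ j, (x j - y j)^2 ≤ d^2

def stei {n : ℕ} (i : Fin (n+1)) (A : Set (Fin (n+1) → ℝ)) : Set (Fin (n+1) → ℝ) :=
  {x | ENNReal.ofReal (2 * |x i|) < volume {t : ℝ | Function.update x i t ∈ A}}

def isoSym {n : ℕ} (j : Fin (n+1)) (A : Set (Fin (n+1) → ℝ)) : Prop :=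
  ∀ x ∈ A, Function.update x j (-x j) ∈ A

lemma stei_sym_self {n : ℕ} (i : Fin (n+1)) (A : Set (Fin (n+1) → ℝ)) : isoSym i (stei i A) := by
  intro x hx
  simpa [stei] using hx

lemma stei_sym {n : ℕ} (i j : Fin (n+1)) (hij : i ≠ j) (A : Set (Fin (n+1) → ℝ))
    (h : isoSym j A) : isoSym j (stei i A) := by
  intro x hx
  simp only [stei, mem_setOf_eq] at hx ⊢
  rw [Function.update_of_ne hij]
  refine hx.trans_le (measure_mono ?_)
  intro t ht
  have := h _ ht
  rw [Function.update_of_ne hij.symm, Function.update_comm hij] at this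
  exact this

lemma stei_D {n : ℕ} (i : Fin (n+1)) (A : Set (Fin (n+1) → ℝ)) (d : ℝ) (h : isoD A d) :
    isoD (stei i A) d := by
  intro x hx y hy
  simp only [stei, mem_setOf_eq] at hx hy
  set P := {t : ℝ | Function.update x i t ∈ A}
  set Q := {t : ℝ | Function.update y i t ∈ A}
  have key : ∃ t ∈ P, ∃ s ∈ Q, |x i - y i| ≤ |t - s| := by
    by_contra! hc
    have hP : P.Nonempty := by
      by_contra h0
      rw [not_nonempty_iff_eq_empty] at h0
      simp [h0] at hx
    have hQ : Q.Nonempty := by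
      by_contra h0
      rw [not_nonempty_iff_eq_empty] at h0
      simp [h0] at hy
    obtain ⟨t0, ht0⟩ := hP
    obtain ⟨s0, hs0⟩ := hQ
    have bP1 : BddAbove P := ⟨s0 + |x i - y i|, fun t ht => by
      have := abs_lt.1 (hc t ht s0 hs0); linarith⟩
    have bP2 : BddBelow P := ⟨s0 - |x i - y i|, fun t ht => by
      have := abs_lt.1 (hc t ht s0 hs0); linarith⟩
    have bQ1 : BddAbove Q := ⟨t0 + |x i - y i|, fun t ht => by
      have := abs_lt.1 (hc t0 ht0 t ht); linarith⟩
    have bQ2 : BddBelow Q := ⟨t0 - |x i - y i|, fun t ht => by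
      have := abs_lt.1 (hc t0 ht0 t ht); linarith⟩
    have vP : volume P ≤ ENNReal.ofReal (sSup P - sInf P) := by
      rw [← Real.volume_Icc]
      exact measure_mono fun t ht => ⟨csInf_le bP2 ht, le_csSup bP1 ht⟩
    have vQ : volume Q ≤ ENNReal.ofReal (sSup Q - sInf Q) := by
      rw [← Real.volume_Icc]
      exact measure_mono fun t ht => ⟨csInf_le bQ2 ht, le_csSup bQ1 ht⟩
    have h1 := (ENNReal.ofReal_lt_ofReal_iff_of_nonneg (by positivity)).1 (hx.trans_le vP)
    have h2 := (ENNReal.ofReal_lt_ofReal_iff_of_nonneg (by positivity)).1 (hy.trans_le vQ)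
    have h3 : sSup P ≤ sInf Q + |x i - y i| := csSup_le ⟨t0, ht0⟩ fun t ht => by
      have : t - |x i - y i| ≤ sInf Q := le_csInf ⟨s0, hs0⟩ fun s hs => by
        have := abs_lt.1 (hc t ht s hs); linarith
      linarith
    have h4 : sSup Q ≤ sInf P + |x i - y i| := csSup_le ⟨s0, hs0⟩ fun s hs => by
      have : s - |x i - y i| ≤ sInf P := le_csInf ⟨t0, ht0⟩ fun t ht => by
        have := abs_lt.1 (hc t ht s hs); linarith
      linarith
    have h5 : |x i - y i| ≤ |x i| + |y i| := abs_sub _ _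
    linarith
  obtain ⟨t, ht, s, hs, hts⟩ := key
  have := h _ ht _ hs
  refine le_trans ?_ this
  rw [Fin.sum_univ_succAbove _ i, Fin.sum_univ_succAbove _ i]
  simp only [Function.update_self, Fin.succAbove_ne, ne_eq, not_false_eq_true,
    Function.update_of_ne]
  gcongr 1
  exact sq_le_sq.2 hts

lemma stei_vol {n : ℕ} (i : Fin (n+1)) (A : Set (Fin (n+1) → ℝ)) (d : ℝ) (hA : MeasurableSet A)
    (h : isoD A d) : MeasurableSet (stei i A) ∧ volume (stei i A) = volume A := by
  have mp := volume_preserving_piFinSuccAbove (fun _ : Fin (n+1) => ℝ) i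
  set e := MeasurableEquiv.piFinSuccAbove (fun _ : Fin (n+1) => ℝ) i
  have he : ∀ x, e x = (x i, i.removeNth x) := fun x => rfl
  have hes : ∀ t y, e.symm (t, y) = i.insertNth t y := fun t y => rfl
  have hupd : ∀ x t, Function.update x i t = e.symm (t, i.removeNth x) := by
    intro x t
    rw [hes]
    simp
  set A' : Set (ℝ × (Fin n → ℝ)) := e.symm ⁻¹' A
  have hA' : MeasurableSet A' := e.symm.measurable hA
  have hAeq : volume A = volume A' := by
    rw [← mp.measure_preimage_equiv]
    congr 1
    ext x; simp [A']
  let L : (Fin n → ℝ) → ENNReal := fun y => volume {t : ℝ | (t, y) ∈ A'}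
  have hL : Measurable L := measurable_measure_prodMk_right hA'
  let S' : Set (ℝ × (Fin n → ℝ)) := {z | ENNReal.ofReal (2 * |z.1|) < L z.2}
  have hS' : MeasurableSet S' := by
    refine measurableSet_lt ?_ ?_ <;> fun_prop
  have hSe : stei i A = e ⁻¹' S' := by
    ext x
    simp only [stei, mem_setOf_eq, hupd]
    rfl
  refine ⟨hSe ▸ e.measurable hS', ?_⟩
  rw [hSe, mp.measure_preimage_equiv, hAeq]
  rw [Measure.volume_eq_prod, Measure.prod_apply_symm hA', Measure.prod_apply_symm hS']
  congr 1
  ext y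
  have hfin : L y < ⊤ := by
    by_cases hne : ({t : ℝ | (t, y) ∈ A'}).Nonempty
    · obtain ⟨t0, ht0⟩ := hne
      refine lt_of_le_of_lt (measure_mono (t := Icc (t0 - |d|) (t0 + |d|)) ?_) ?_
      · intro t ht
        have := h _ ht _ ht0
        simp only [hes] at this
        rw [Fin.sum_univ_succAbove _ i] at this
        simp only [Fin.insertNth_apply_same, Fin.insertNth_apply_succAbove, sub_self] at this
        have h2 : (t - t0)^2 ≤ d^2 := by simpa using this
        have := abs_le.1 (sq_le_sq.1 h2)
        constructor <;> linarith
      · simp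
    · rw [not_nonempty_iff_eq_empty] at hne
      simp only [L]; rw [hne]; simp
  have : (fun x => (x, y)) ⁻¹' S' = Ioo (-((L y).toReal/2)) ((L y).toReal/2) := by
    ext t
    simp only [S', mem_preimage, mem_setOf_eq, mem_Ioo, ← abs_lt]
    rw [ENNReal.ofReal_lt_iff_lt_toReal (by positivity) hfin.ne]
    constructor <;> intro h <;> linarith
  rw [this, Real.volume_Ioo]
  have : (L y).toReal / 2 - -((L y).toReal / 2) = (L y).toReal := by ring
  rw [this, ENNReal.ofReal_toReal hfin.ne]
  rfl

lemma iso_pi {n : ℕ} (A : Set (Fin (n+1) → ℝ)) (ρ : ℝ) (hρ : 0 ≤ ρ) (hA : MeasurableSet A)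
    (h : isoD A (2*ρ)) : volume A ≤ volume {x : Fin (n+1) → ℝ | ∑ j, (x j)^2 ≤ ρ^2} := by
  have : ∀ s : Finset (Fin (n+1)), ∃ B, MeasurableSet B ∧ isoD B (2*ρ) ∧ volume B = volume A ∧
      ∀ j ∈ s, isoSym j B := by
    intro s
    induction s using Finset.induction_on with
    | empty => exact ⟨A, hA, h, rfl, by simp⟩
    | insert i s his ih =>
      obtain ⟨B, hB, hD, hv, hs⟩ := ih
      have := stei_vol i B _ hB hD
      refine ⟨stei i B, this.1, stei_D i B _ hD, this.2.trans hv, ?_⟩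
      intro j hj
      rcases Finset.mem_insert.1 hj with rfl | hj'
      · exact stei_sym_self _ _
      · exact stei_sym _ _ (by rintro rfl; exact his hj') _ (hs j hj')
  obtain ⟨B, hB, hD, hv, hs⟩ := this Finset.univ
  rw [← hv]
  refine measure_mono fun x hx => ?_
  have hneg : ∀ s : Finset (Fin (n+1)), (fun j => if j ∈ s then - x j else x j) ∈ B := by
    intro s
    induction s using Finset.induction_on with
    | empty => simpa using hx
    | insert i s his ih =>
      have := hs i (Finset.mem_univ _) _ ih
      convert this using 1
      ext j
      by_cases hj : j = i
      · subst hj; simp [his]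
      · simp [hj]
  have h1 := hD _ hx _ (hneg Finset.univ)
  simp only [Finset.mem_univ, if_true, sub_neg_eq_add] at h1
  have h2 : ∑ j, (x j + x j)^2 = 4 * ∑ j, (x j)^2 := by
    rw [Finset.mul_sum]; congr 1; ext j; ring
  simp only [mem_setOf_eq]
  nlinarith

lemma isodiametric {N : ℕ} (hN : 2 ≤ N) (A : Set (EuclideanSpace ℝ (Fin N))) (ρ : ℝ) (hρ : 0 < ρ)
    (hA : MeasurableSet A) (h : ∀ x ∈ A, ∀ y ∈ A, dist x y ≤ 2 * ρ)
    (c : EuclideanSpace ℝ (Fin N)) :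
    volume A ≤ volume (ball c ρ) := by
  obtain ⟨n, rfl⟩ : ∃ n, N = n + 1 := ⟨N - 1, by omega⟩
  have mp := (EuclideanSpace.volume_preserving_symm_measurableEquiv_toLp (Fin (n+1)))
  set e := (MeasurableEquiv.toLp 2 (Fin (n+1) → ℝ))
  have key := iso_pi (e ⁻¹' A) ρ hρ.le (e.measurable hA) ?_
  · have h1 : volume (e ⁻¹' A) = volume A := by
      have := mp.symm.measure_preimage_equiv A
      exact this
    have h2 : volume {x : Fin (n+1) → ℝ | ∑ j, (x j)^2 ≤ ρ^2} =
        volume (closedBall (0 : EuclideanSpace ℝ (Fin (n+1))) ρ) := by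
      rw [← mp.symm.measure_preimage_equiv]
      congr 1
      ext x
      simp only [mem_setOf_eq, mem_preimage, mem_closedBall, dist_zero_right]
      rw [EuclideanSpace.norm_eq, Real.sqrt_le_left hρ.le]
      simp [e]
    rw [h1, h2, Measure.addHaar_closedBall_eq_addHaar_ball] at key
    rw [Measure.addHaar_ball_center]
    exact key
  · intro x hx y hy
    have := h _ hx _ hy
    rw [EuclideanSpace.dist_eq, Real.sqrt_le_left (by linarith)] at this
    simpa [e, Real.dist_eq] using this


structure Prof (N : ℕ) (p r Λ : ℝ) (φ γ : ℝ → ℝ) : Prop where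
  anti : Antitone φ
  lip : ∃ K : NNReal, LipschitzWith K φ
  zero : ∃ r1 < r, ∀ t, r1 ≤ t → φ t = 0
  pos : 0 < φ 0
  gnn : ∀ t, 0 ≤ γ t
  gm : Measurable γ
  loc : ∀ τ C, γ τ < C → ∀ᶠ x in nhds τ, |φ x - φ τ| ≤ C * |x - τ|
  ineq : ∀ s, 0 < s → ∫⁻ t in Ioo 0 s, ENNReal.ofReal (t^(N-1) * γ t ^ p) ≤
    ENNReal.ofReal Λ * ∫⁻ t in Ioo 0 s, ENNReal.ofReal (t^(N-1) * φ t ^ p)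

lemma lint_eq (N : ℕ) (p : ℝ) (s : ℝ) (hs : 0 ≤ s) (g : ℝ → ℝ) (hg : Measurable g)
    (h0 : ∀ t, 0 ≤ g t) (hi : IntervalIntegrable (fun t => t^(N-1) * g t ^ p) volume 0 s) :
    ∫⁻ t in Ioo 0 s, ENNReal.ofReal (t^(N-1) * g t ^ p) =
      ENNReal.ofReal (∫ t in (0:ℝ)..s, t^(N-1) * g t ^ p) := by
  rw [intervalIntegral.integral_of_le hs, ofReal_integral_eq_lintegral_ofReal, Measure.restrict_congr_set Ioo_ae_eq_Ioc]
  · exact (intervalIntegrable_iff_integrableOn_Ioc_of_le hs).1 hi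
  · filter_upwards [ae_restrict_mem measurableSet_Ioc] with t ht
    have := ht.1
    have := h0 t
    positivity

/-- one dimensional core -/
lemma prof_of_1d (N : ℕ) (hN : 2 ≤ N) (p r Λ : ℝ) (hp : 1 < p) (hr : 0 < r) (hΛ : 0 < Λ)
    (g : ℝ → ℝ) (hg : Continuous g) (g0 : ∀ t, 0 ≤ g t) (r1 : ℝ) (hr1 : r1 < r)
    (gz : ∀ t, r1 ≤ |t| → g t = 0)
    (H : (∫ t in (0:ℝ)..r, t^(N-1) * g t ^ p) <
      Λ * ∫ t in (0:ℝ)..r, t^(N-1) * (∫ x in t..r, g x) ^ p) :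
    ∃ φ γ, Prof N p r Λ φ γ := by
  set u : ℝ → ℝ := fun t => ∫ x in t..r, g x with hu
  have ud : ∀ t, HasDerivAt u (- g t) t := fun t =>
    intervalIntegral.integral_hasDerivAt_left (hg.intervalIntegrable _ _)
      (hg.stronglyMeasurableAtFilter _ _) hg.continuousAt
  have uc : Continuous u := continuous_iff_continuousAt.2 fun t => (ud t).continuousAt
  have ua : Antitone u := antitone_of_deriv_nonpos (fun t => (ud t).differentiableAt)
    fun t => by rw [(ud t).deriv]; linarith [g0 t]
  have uz : ∀ t, max r1 0 ≤ t → u t = 0 := by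
    intro t ht
    have : u t = ∫ x in t..r, (0:ℝ) := by
      refine intervalIntegral.integral_congr fun x hx => ?_
      apply gz
      have h1 : max r1 0 ≤ x := by
        have : max r1 0 ≤ min t r := le_min ht (max_le hr1.le hr.le)
        exact this.trans hx.1
      exact ((le_max_left _ _).trans h1).trans (le_abs_self _)
    simpa using this
  have u0 : ∀ t, 0 ≤ u t := by
    intro t
    have := ua (le_max_left t (max r1 0))
    rw [uz _ (le_max_right _ _)] at this
    exact this
  obtain ⟨K, hK⟩ : ∃ K, ∀ t, g t ≤ K := by
    obtain ⟨K, hK⟩ := (isCompact_Icc (a := -r1) (b := r1)).bddAbove_image hg.continuousOn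
    refine ⟨max K 0, fun t => ?_⟩
    by_cases h : r1 ≤ |t|
    · rw [gz t h]; exact le_max_right _ _
    · push Not at h
      exact (hK ⟨t, ⟨(abs_lt.1 h).1.le, (abs_lt.1 h).2.le⟩, rfl⟩).trans (le_max_left _ _)
  have ul : LipschitzWith K.toNNReal u := by
    apply lipschitzWith_of_nnnorm_deriv_le (fun t => (ud t).differentiableAt)
    intro t
    rw [(ud t).deriv]
    rw [← NNReal.coe_le_coe, coe_nnnorm, norm_neg, Real.norm_of_nonneg (g0 t)]
    exact (hK t).trans (Real.le_coe_toNNReal K)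
  have pc : Continuous fun x : ℝ => x ^ p := Real.continuous_rpow_const (by linarith)
  have cF : Continuous fun t => t^(N-1) * g t ^ p := by fun_prop
  have cG : Continuous fun t => t^(N-1) * u t ^ p := by fun_prop
  set F : ℝ → ℝ := fun s => ∫ t in (0:ℝ)..s, t^(N-1) * g t ^ p with hF
  set G : ℝ → ℝ := fun s => ∫ t in (0:ℝ)..s, t^(N-1) * u t ^ p with hG
  have FC : Continuous F := intervalIntegral.continuous_primitive (fun a b => cF.intervalIntegrable _ _) _
  have GC : Continuous G := intervalIntegral.continuous_primitive (fun a b => cG.intervalIntegrable _ _) _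
  set S := {s ∈ Icc 0 r | Λ * G s ≤ F s}
  have Sc : IsCompact S := by
    apply isCompact_Icc.inter_right
    exact isClosed_le (by fun_prop) FC
  have Sne : S.Nonempty := ⟨0, ⟨le_refl _, hr.le⟩, by simp [hF, hG]⟩
  obtain ⟨σ, hσS, hσ⟩ := Sc.exists_isGreatest Sne
  have hσr : σ < r := by
    refine lt_of_le_of_ne hσS.1.2 ?_
    rintro rfl
    exact absurd hσS.2 (not_le.2 H)
  have hσ0 : 0 ≤ σ := hσS.1.1
  have hgt : ∀ s, σ < s → F s ≤ Λ * G s := by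
    intro s hs
    by_cases hsr : s ≤ r
    · by_contra! hc
      have : s ∈ S := ⟨⟨hσ0.trans hs.le, hsr⟩, hc.le⟩
      exact absurd (hσ this) (not_le.2 hs)
    · push Not at hsr
      have e1 : F s = F r := by
        simp only [hF]
        rw [← intervalIntegral.integral_add_adjacent_intervals (b := r) (cF.intervalIntegrable _ _) (cF.intervalIntegrable _ _)]
        rw [add_eq_left]
        rw [intervalIntegral.integral_congr (g := fun _ => (0:ℝ))]
        · simp
        · intro x hx
          rw [uIcc_of_le hsr.le] at hx
          have : g x = 0 := gz x (by
            have := hx.1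
            exact (hr1.le.trans this).trans (le_abs_self _))
          simp [this, Real.zero_rpow (by linarith : p ≠ 0)]
      have e2 : G r ≤ G s := by
        simp only [hG]
        rw [← intervalIntegral.integral_add_adjacent_intervals (a := 0) (b := r) (c := s) (cG.intervalIntegrable _ _) (cG.intervalIntegrable _ _)]
        have : 0 ≤ ∫ t in r..s, t^(N-1) * u t ^ p := by
          apply intervalIntegral.integral_nonneg hsr.le
          intro t ht
          have := u0 t
          have := hr.trans_le ht.1
          positivity
        linarith
      rw [e1]
      exact H.le.trans (mul_le_mul_of_nonneg_left e2 hΛ.le)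
  set φ : ℝ → ℝ := fun t => u (max t σ) with hφ
  set γ : ℝ → ℝ := fun t => if t < σ then 0 else g t with hγ
  have gnn : ∀ t, 0 ≤ γ t := by
    intro t; simp only [hγ]; split_ifs
    · exact le_rfl
    · exact g0 t
  have φc : Continuous φ := by fun_prop
  have φ0 : ∀ t, 0 ≤ φ t := fun t => u0 _
  have cφ : Continuous fun t => t^(N-1) * φ t ^ p := by fun_prop
  have γm : Measurable γ := Measurable.ite measurableSet_Iio measurable_const hg.measurable
  refine ⟨φ, γ, ?_, ?_, ?_, ?_, gnn, γm, ?_, ?_⟩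
  · intro a b hab
    exact ua (max_le_max_right _ hab)
  · refine ⟨K.toNNReal * 1, ul.comp ?_⟩
    simpa using (LipschitzWith.id.max_const σ)
  · refine ⟨max (max r1 0) σ, max_lt (max_lt hr1 hr) hσr, fun t ht => uz _ ?_⟩
    exact ((le_max_left _ _).trans ht).trans (le_max_left _ _)
  · show 0 < u (max 0 σ)
    rw [max_eq_right hσ0]
    refine lt_of_le_of_ne (u0 _) fun h0 => ?_
    have hz : ∀ t, σ ≤ t → u t = 0 := fun t ht => le_antisymm (h0.symm ▸ ua ht) (u0 t)
    have e2 : G r = G σ := by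
      simp only [hG]
      rw [← intervalIntegral.integral_add_adjacent_intervals (a := 0) (b := σ) (c := r) (cG.intervalIntegrable _ _) (cG.intervalIntegrable _ _)]
      rw [add_eq_left]
      rw [intervalIntegral.integral_congr (g := fun _ => (0:ℝ))]
      · simp
      · intro x hx
        rw [uIcc_of_le hσr.le] at hx
        simp [hz x hx.1, Real.zero_rpow (by linarith : p ≠ 0)]
    have e1 : F σ ≤ F r := by
      simp only [hF]
      rw [← intervalIntegral.integral_add_adjacent_intervals (a := 0) (b := σ) (c := r) (cF.intervalIntegrable _ _) (cF.intervalIntegrable _ _)]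
      have : 0 ≤ ∫ t in σ..r, t^(N-1) * g t ^ p := by
        apply intervalIntegral.integral_nonneg hσr.le
        intro t ht
        have := g0 t
        have := hσ0.trans ht.1
        positivity
      linarith
    have := hσS.2
    change F r < Λ * G r at H
    rw [e2] at H
    linarith
  · intro τ C hC
    by_cases hτ : τ < σ
    · have hC0 : 0 < C := by simpa [hγ, hτ] using hC
      filter_upwards [eventually_lt_nhds hτ] with x hx
      simp only [hφ, max_eq_right hx.le, max_eq_right hτ.le, sub_self, abs_zero]
      positivity
    · push Not at hτ
      have hgC : g τ < C := by simpa [hγ, not_lt.2 hτ] using hC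
      have h1 := (ud τ).isLittleO.def (show 0 < C - g τ by linarith)
      have hC0 : 0 ≤ C := (g0 τ).trans hgC.le
      have h2 : ∀ᶠ x in nhds τ, |u x - u τ| ≤ C * |x - τ| := by
        filter_upwards [h1] with x hx
        simp only [Real.norm_eq_abs, smul_eq_mul] at hx
        have h3 : |(x - τ) * (- g τ)| = g τ * |x - τ| := by
          rw [abs_mul, abs_neg, abs_of_nonneg (g0 τ), mul_comm]
        have := abs_sub_abs_le_abs_sub (u x - u τ) ((x - τ) * (- g τ))
        rw [h3] at this
        nlinarith
      have hm : Filter.Tendsto (fun x => max x σ) (nhds τ) (nhds τ) := by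
        have : Continuous fun x => max x σ := by fun_prop
        have := this.tendsto τ
        rwa [max_eq_left hτ] at this
      filter_upwards [hm.eventually h2] with x hx
      simp only [hφ, max_eq_left hτ]
      refine hx.trans (mul_le_mul_of_nonneg_left ?_ hC0)
      have := abs_max_sub_max_le_abs x τ σ
      rwa [max_eq_left hτ] at this
  · intro s hs
    rw [lint_eq N p s hs.le φ φc.measurable φ0 (cφ.intervalIntegrable _ _)]
    by_cases hsσ : s ≤ σ
    · have : ∫⁻ t in Ioo 0 s, ENNReal.ofReal (t^(N-1) * γ t ^ p) = ∫⁻ t in Ioo 0 s, 0 := by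
        refine setLIntegral_congr_fun measurableSet_Ioo fun t ht => ?_
        have : t < σ := ht.2.trans_le hsσ
        simp [hγ, this, Real.zero_rpow (by linarith : p ≠ 0)]
      rw [this]; simp
    · push Not at hsσ
      have i1 : IntervalIntegrable (fun t => t^(N-1) * γ t ^ p) volume 0 σ := by
        refine (IntervalIntegrable.congr_ae (f := fun _ => (0:ℝ)) intervalIntegrable_const ?_)
        rw [uIoc_of_le hσ0, ← Measure.restrict_congr_set Ioo_ae_eq_Ioc]
        filter_upwards [ae_restrict_mem measurableSet_Ioo] with t ht
        simp [hγ, ht.2, Real.zero_rpow (by linarith : p ≠ 0)]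
      have i2 : IntervalIntegrable (fun t => t^(N-1) * γ t ^ p) volume σ s := by
        refine (IntervalIntegrable.congr (f := fun t => t^(N-1) * g t ^ p) ?_ (cF.intervalIntegrable _ _))
        intro t ht
        rw [uIoc_of_le hsσ.le] at ht
        simp [hγ, not_lt.2 ht.1.le]
      rw [lint_eq N p s hs.le γ γm gnn (i1.trans i2), ← ENNReal.ofReal_mul hΛ.le]
      apply ENNReal.ofReal_le_ofReal
      rw [← intervalIntegral.integral_add_adjacent_intervals i1 i2,
        ← intervalIntegral.integral_add_adjacent_intervals (cφ.intervalIntegrable 0 σ) (cφ.intervalIntegrable σ s)]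
      have z1 : ∫ t in (0:ℝ)..σ, t^(N-1) * γ t ^ p = 0 := by
        rw [intervalIntegral.integral_of_le hσ0, ← integral_Ioc_eq_integral_Ioo.symm]
        rw [setIntegral_congr_fun (g := fun _ => (0:ℝ)) measurableSet_Ioo]
        · simp
        · intro t ht
          simp [hγ, ht.2, Real.zero_rpow (by linarith : p ≠ 0)]
      have z2 : ∫ t in σ..s, t^(N-1) * γ t ^ p = F s - F σ := by
        simp only [hF]
        rw [intervalIntegral.integral_interval_sub_left (cF.intervalIntegrable _ _) (cF.intervalIntegrable _ _)]
        refine intervalIntegral.integral_congr fun t ht => ?_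
        rw [uIcc_of_le hsσ.le] at ht
        simp [hγ, not_lt.2 ht.1]
      have z3 : ∫ t in σ..s, t^(N-1) * φ t ^ p = G s - G σ := by
        simp only [hG]
        rw [intervalIntegral.integral_interval_sub_left (cG.intervalIntegrable _ _) (cG.intervalIntegrable _ _)]
        refine intervalIntegral.integral_congr fun t ht => ?_
        rw [uIcc_of_le hsσ.le] at ht
        simp [hφ, ht.1]
      have z4 : 0 ≤ ∫ t in (0:ℝ)..σ, t^(N-1) * φ t ^ p := by
        apply intervalIntegral.integral_nonneg hσ0
        intro t ht
        have := φ0 t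
        have := ht.1
        positivity
      rw [z1, z2, z3]
      have := hgt s hsσ
      have := hσS.2
      nlinarith [mul_nonneg hΛ.le z4]


lemma hardy_pt (p a b : ℝ) (hp : 1 < p) (ha : 0 ≤ a) (hb : 0 ≤ b) :
    a ^ (p-1) * b ≤ a ^ p / 2 + (2 * b) ^ p := by
  by_cases h : b ≤ a / 2
  · have h1 : a ^ p = a ^ (p-1) * a := by
      rcases ha.eq_or_lt with rfl | ha
      · simp [Real.zero_rpow (by linarith : p ≠ 0)]
      · rw [← Real.rpow_add_one ha.ne']; ring_nf
    have h2 : 0 ≤ a ^ (p-1) := by positivity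
    have h3 : 0 ≤ (2*b)^p := by positivity
    nlinarith
  · push Not at h
    have hb' : 0 < b := by linarith
    have h1 : (2 * b) ^ p = (2*b) ^ (p-1) * (2*b) := by
      rw [← Real.rpow_add_one (by positivity)]; ring_nf
    have h2 : a ^ (p-1) ≤ (2*b)^(p-1) := Real.rpow_le_rpow ha (by linarith) (by linarith)
    have h3 : 0 ≤ a ^ p := by positivity
    have h4 : 0 ≤ (2*b)^(p-1) := by positivity
    nlinarith

lemma hardy (N : ℕ) (hN : 2 ≤ N) (p r : ℝ) (hp : 1 < p) (hr : 0 < r) :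
    ∃ C : ℝ, 0 < C ∧ ∀ g : ℝ → ℝ, Continuous g → (∀ t, 0 ≤ g t) →
      (∫ t in (0:ℝ)..r, t^(N-1) * (∫ x in t..r, g x) ^ p) ≤
        C * ∫ t in (0:ℝ)..r, t^(N-1) * g t ^ p := by
  refine ⟨2 * (2 * (p * r)) ^ p, by positivity, fun g hg g0 => ?_⟩
  set u : ℝ → ℝ := fun t => ∫ x in t..r, g x with hu
  have ud : ∀ t, HasDerivAt u (- g t) t := fun t =>
    intervalIntegral.integral_hasDerivAt_left (hg.intervalIntegrable _ _)
      (hg.stronglyMeasurableAtFilter _ _) hg.continuousAt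
  have uc : Continuous u := continuous_iff_continuousAt.2 fun t => (ud t).continuousAt
  have ua : Antitone u := antitone_of_deriv_nonpos (fun t => (ud t).differentiableAt)
    fun t => by rw [(ud t).deriv]; linarith [g0 t]
  have ur : u r = 0 := by simp [hu]
  have u0 : ∀ t ≤ r, 0 ≤ u t := fun t ht => ur ▸ ua ht
  have pc : Continuous fun x : ℝ => x ^ p := Real.continuous_rpow_const (by linarith)
  have pc1 : Continuous fun x : ℝ => x ^ (p-1) := Real.continuous_rpow_const (by linarith)
  have cF : Continuous fun t => t^(N-1) * g t ^ p := by fun_prop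
  have cG : Continuous fun t => t^(N-1) * u t ^ p := by fun_prop
  have d : ∀ t, HasDerivAt (fun t => t^N * u t ^ p)
      (N * t^(N-1) * u t ^ p + t^N * (-g t * p * u t ^ (p-1))) t := by
    intro t
    exact (hasDerivAt_pow N t).mul ((ud t).rpow_const (Or.inr hp.le))
  have cD : Continuous fun t => (N * t^(N-1) * u t ^ p + t^N * (-g t * p * u t ^ (p-1))) := by
    fun_prop
  have e := intervalIntegral.integral_eq_sub_of_hasDerivAt (a := 0) (b := r) (fun t _ => d t)
    (cD.intervalIntegrable _ _)
  rw [ur, Real.zero_rpow (by linarith : p ≠ 0), zero_pow (by omega)] at e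
  have key : ∫ t in (0:ℝ)..r, (t^(N-1) * u t ^ p) ≤ ∫ t in (0:ℝ)..r,
     ((N * t^(N-1) * u t ^ p + t^N * (-g t * p * u t ^ (p-1))) + (1/2 * (t^(N-1) * u t ^ p)
      + (2 * (p * r)) ^ p * (t^(N-1) * g t ^ p))) := by
    apply intervalIntegral.integral_mono_on hr.le (cG.intervalIntegrable _ _)
      (Continuous.intervalIntegrable (by fun_prop) _ _)
    intro t ht
    have h1 := hardy_pt p (u t) (p * r * g t) hp (u0 t ht.2) (by have := g0 t; positivity)
    rw [show 2 * (p * r * g t) = (2 * (p * r)) * g t by ring,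
      Real.mul_rpow (by positivity) (g0 t)] at h1
    have ht0 := ht.1
    have hA : 0 ≤ t^(N-1) := by positivity
    have hN1 : (1:ℝ) ≤ N := by exact_mod_cast (by omega : 1 ≤ N)
    have h2 : t^N = t^(N-1) * t := by rw [← pow_succ]; congr 1; omega
    have h3 : 0 ≤ u t ^ (p-1) * (p * g t) := by
      have := u0 t ht.2
      have := g0 t
      positivity
    have h4 : t * (u t ^ (p-1) * (p * g t)) ≤ r * (u t ^ (p-1) * (p * g t)) :=
      mul_le_mul_of_nonneg_right ht.2 h3
    have h5 : 0 ≤ u t ^ p := by have := u0 t ht.2; positivity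
    have h6 : u t ^ p ≤ N * u t ^ p := by nlinarith
    rw [h2]
    have : t^(N-1) * (u t ^ p) ≤ t^(N-1) * ((N * u t ^ p - t * (u t ^ (p-1) * (p * g t))) +
      (1/2 * u t ^ p + (2 * (p*r))^p * g t ^ p)) := by
      apply mul_le_mul_of_nonneg_left _ hA
      nlinarith
    nlinarith
  rw [intervalIntegral.integral_add (cD.intervalIntegrable _ _) (Continuous.intervalIntegrable (by fun_prop) _ _), e,
    intervalIntegral.integral_add (Continuous.intervalIntegrable (by fun_prop) _ _) (Continuous.intervalIntegrable (by fun_prop) _ _),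
    intervalIntegral.integral_const_mul, intervalIntegral.integral_const_mul] at key
  nlinarith


abbrev EE (N : ℕ) := EuclideanSpace ℝ (Fin N)

lemma polar {N : ℕ} (hN : 2 ≤ N) (Φ : EE N → ENNReal) (hΦ : Measurable Φ) :
    ∫⁻ x, Φ x = ∫⁻ θ : sphere (0 : EE N) 1, (∫⁻ t in Ioi (0:ℝ),
      ENNReal.ofReal (t^(N-1)) * Φ (t • (θ : EE N)))
      ∂(volume : Measure (EE N)).toSphere := by
  have : Nonempty (Fin N) := ⟨⟨0, by omega⟩⟩
  have mp := (volume : Measure (EE N)).measurePreserving_homeomorphUnitSphereProd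
  rw [finrank_euclideanSpace, Fintype.card_fin] at mp
  have h1 : ∫⁻ x, Φ x = ∫⁻ x : ({(0:EE N)}ᶜ : Set (EE N)), Φ x ∂((volume : Measure (EE N)).comap (↑)) := by
    rw [lintegral_subtype_comap (measurableSet_singleton _).compl, restrict_compl_singleton]
  have h2 : ∫⁻ x : ({(0:EE N)}ᶜ : Set (EE N)), Φ x ∂((volume : Measure (EE N)).comap (↑)) =
    ∫⁻ z : sphere (0:EE N) 1 × Ioi (0:ℝ), Φ (z.2.1 • z.1.1)
      ∂((volume : Measure (EE N)).toSphere.prod (Measure.volumeIoiPow (N - 1))) := by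
    rw [← mp.lintegral_comp_emb (Homeomorph.measurableEmbedding _)]
    congr 1
    ext x
    have hx : (x:EE N) ≠ 0 := x.2
    have hn : ‖(x:EE N)‖ ≠ 0 := norm_ne_zero_iff.2 hx
    simp [smul_smul, mul_inv_cancel₀ hn]
  rw [h1, h2, lintegral_prod]
  · congr 1
    ext θ
    rw [Measure.volumeIoiPow, lintegral_withDensity_eq_lintegral_mul]
    · simp only [Pi.mul_apply]
      rw [lintegral_subtype_comap measurableSet_Ioi (fun t : ℝ => ENNReal.ofReal (t^(N-1)) * Φ (t • (θ:EE N)))]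
    · fun_prop
    · fun_prop
  · fun_prop

lemma lint_scale (h : ℝ → ENNReal) (b : ℝ) (hb : 0 < b) (hm : Measurable h) :
    ∫⁻ t, h t = ENNReal.ofReal b * ∫⁻ t, h (b * t) := by
  have := Real.smul_map_volume_mul_left (a := b) hb.ne'
  conv_lhs => rw [← this]
  rw [lintegral_smul_measure, lintegral_map hm (by fun_prop), abs_of_pos hb]
  rfl


lemma oned_of_v {N : ℕ} (hN : 2 ≤ N) (p r Λ : ℝ) (hp : 1 < p) (hr : 0 < r) (hΛ : 0 < Λ)
    (c : EE N) (v : EE N → ℝ) (hv : ContDiff ℝ (⊤ : ℕ∞) v) (hc : HasCompactSupport v)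
    (hs : tsupport v ⊆ ball c r)
    (H : (∫ x in ball c r, ‖fderiv ℝ v x‖ ^ p) < Λ * ∫ x in ball c r, |v x| ^ p) :
    ∃ g : ℝ → ℝ, Continuous g ∧ (∀ t, 0 ≤ g t) ∧ ∃ r1 < r, (∀ t, r1 ≤ |t| → g t = 0) ∧
    (∫ t in (0:ℝ)..r, t^(N-1) * g t ^ p) <
      Λ * ∫ t in (0:ℝ)..r, t^(N-1) * (∫ x in t..r, g x) ^ p := by
  obtain ⟨r1, hr1, hsr⟩ := exists_lt_subset_ball (isClosed_tsupport v) hs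
  have pc : Continuous fun x : ℝ => x ^ p := Real.continuous_rpow_const (by linarith)
  have p0 : p ≠ 0 := by linarith
  have dc : Continuous (fderiv ℝ v) := hv.continuous_fderiv (by simp)
  have vc : Continuous v := hv.continuous
  have c1 : Continuous fun x => ‖fderiv ℝ v x‖ ^ p := by fun_prop
  have c2 : Continuous fun x => |v x| ^ p := by fun_prop
  have z0 : ∀ x, x ∉ ball c r1 → v x = 0 := fun x hx =>
    image_eq_zero_of_notMem_tsupport fun h => hx (hsr h)
  have z1 : ∀ x, x ∉ ball c r1 → fderiv ℝ v x = 0 := fun x hx =>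
    image_eq_zero_of_notMem_tsupport fun h => hx (hsr (tsupport_fderiv_subset ℝ h))
  have hb : ball c r1 ⊆ ball c r := ball_subset_ball hr1.le
  rw [setIntegral_eq_integral_of_forall_compl_eq_zero (fun x hx => by
      rw [z1 x (fun h => hx (hb h))]; simp [Real.zero_rpow p0]),
    setIntegral_eq_integral_of_forall_compl_eq_zero (fun x hx => by
      rw [z0 x (fun h => hx (hb h))]; simp [Real.zero_rpow p0])] at H
  have i1 : Integrable fun x => ‖fderiv ℝ v x‖ ^ p := by
    apply c1.integrable_of_hasCompactSupport
    refine (hc.fderiv ℝ).comp_left (g := fun L => ‖L‖ ^ p) (by simp [Real.zero_rpow p0])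
  have i2 : Integrable fun x => |v x| ^ p := by
    apply c2.integrable_of_hasCompactSupport
    exact hc.comp_left (g := fun L => |L| ^ p) (by simp [Real.zero_rpow p0])
  have H2 : ∫⁻ x, ENNReal.ofReal (‖fderiv ℝ v x‖ ^ p) <
      ENNReal.ofReal Λ * ∫⁻ x, ENNReal.ofReal (|v x| ^ p) := by
    rw [← ofReal_integral_eq_lintegral_ofReal i1 (.of_forall fun x => by positivity),
      ← ofReal_integral_eq_lintegral_ofReal i2 (.of_forall fun x => by positivity),
      ← ENNReal.ofReal_mul hΛ.le]
    exact (ENNReal.ofReal_lt_ofReal_iff_of_nonneg (by positivity)).2 H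
  rw [← lintegral_add_left_eq_self _ c,
    ← lintegral_add_left_eq_self (fun x => ENNReal.ofReal (|v x| ^ p)) c,
    polar hN _ (by fun_prop), polar hN _ (by fun_prop), ← lintegral_const_mul' _ _ ENNReal.ofReal_ne_top] at H2
  obtain ⟨θ, hθ⟩ : ∃ θ : sphere (0:EE N) 1, (∫⁻ t in Ioi (0:ℝ), ENNReal.ofReal (t^(N-1)) *
      ENNReal.ofReal (‖fderiv ℝ v (c + t • (θ:EE N))‖ ^ p)) < ENNReal.ofReal Λ *
      ∫⁻ t in Ioi (0:ℝ), ENNReal.ofReal (t^(N-1)) * ENNReal.ofReal (|v (c + t • (θ:EE N))| ^ p) := by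
    by_contra! hcon
    exact absurd (lintegral_mono hcon) (not_le.2 H2)
  have hn : ‖(θ:EE N)‖ = 1 := by simpa using θ.2
  have hmem : ∀ t : ℝ, r1 ≤ |t| → c + t • (θ:EE N) ∉ ball c r1 := by
    intro t ht h
    simp [norm_smul, hn] at h
    linarith
  have fd : ∀ t, HasDerivAt (fun t : ℝ => v (c + t • (θ:EE N))) (fderiv ℝ v (c + t • (θ:EE N)) θ) t := by
    intro t
    have h1 : HasDerivAt (fun t : ℝ => c + t • (θ:EE N)) ((1:ℝ) • (θ:EE N)) t :=
      ((hasDerivAt_id t).smul_const _).const_add c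
    rw [one_smul] at h1
    exact ((hv.differentiable (by simp)) _).hasFDerivAt.comp_hasDerivAt t h1
  set g : ℝ → ℝ := fun t => |fderiv ℝ v (c + t • (θ:EE N)) θ| with hg
  have gc : Continuous g := by fun_prop
  have g0 : ∀ t, 0 ≤ g t := fun t => abs_nonneg _
  have gz : ∀ t, r1 ≤ |t| → g t = 0 := by
    intro t ht
    simp [hg, z1 _ (hmem t ht)]
  refine ⟨g, gc, g0, r1, hr1, gz, ?_⟩
  set u : ℝ → ℝ := fun t => ∫ x in t..r, g x with hu
  have uc : Continuous u := continuous_iff_continuousAt.2 fun t =>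
    (intervalIntegral.integral_hasDerivAt_left (hg ▸ gc.intervalIntegrable _ _)
      (gc.stronglyMeasurableAtFilter _ _) gc.continuousAt).continuousAt
  have hvu : ∀ t ≤ r, |v (c + t • (θ:EE N))| ≤ u t := by
    intro t ht
    have h1 := intervalIntegral.integral_eq_sub_of_hasDerivAt (a := t) (b := r) (fun t _ => fd t)
      (Continuous.intervalIntegrable (by fun_prop) _ _)
    rw [z0 (c + r • (θ:EE N)) (hmem r (hr1.le.trans (le_abs_self _)))] at h1
    have h2 := intervalIntegral.abs_integral_le_integral_abs (μ := volume) (f := fun t : ℝ => fderiv ℝ v (c + t • (θ:EE N)) θ) ht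
    rw [h1, zero_sub, abs_neg] at h2
    exact h2
  have u0 : ∀ t ≤ r, 0 ≤ u t := fun t ht => (abs_nonneg _).trans (hvu t ht)
  have cF : Continuous fun t => t^(N-1) * g t ^ p := by fun_prop
  have cG : Continuous fun t => t^(N-1) * u t ^ p := by fun_prop
  have L1 : ENNReal.ofReal (∫ t in (0:ℝ)..r, t^(N-1) * g t ^ p) ≤ ∫⁻ t in Ioi (0:ℝ), ENNReal.ofReal (t^(N-1)) *
      ENNReal.ofReal (‖fderiv ℝ v (c + t • (θ:EE N))‖ ^ p) := by
    rw [← lint_eq N p r hr.le g gc.measurable g0 (cF.intervalIntegrable _ _)]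
    refine (setLIntegral_mono' measurableSet_Ioo fun t ht => ?_).trans (lintegral_mono_set Ioo_subset_Ioi_self)
    have := ht.1
    rw [← ENNReal.ofReal_mul (by positivity)]
    apply ENNReal.ofReal_le_ofReal
    gcongr
    have := (fderiv ℝ v (c + t • (θ:EE N))).le_opNorm θ
    rwa [hn, mul_one] at this
  have L2 : ∫⁻ t in Ioi (0:ℝ), ENNReal.ofReal (t^(N-1)) * ENNReal.ofReal (|v (c + t • (θ:EE N))| ^ p) ≤
      ENNReal.ofReal (∫ t in (0:ℝ)..r, t^(N-1) * u t ^ p) := by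
    have : ∫ t in (0:ℝ)..r, t^(N-1) * u t ^ p = ∫ t in (0:ℝ)..r, t^(N-1) * |u t| ^ p := by
      refine intervalIntegral.integral_congr fun t ht => ?_
      rw [uIcc_of_le hr.le] at ht
      simp only [abs_of_nonneg (u0 t ht.2)]
    rw [this, ← lint_eq N p r hr.le (fun t => |u t|) (by fun_prop) (fun t => abs_nonneg _)
      (Continuous.intervalIntegrable (by fun_prop) _ _)]
    rw [← lintegral_indicator measurableSet_Ioi, ← lintegral_indicator measurableSet_Ioo]
    refine lintegral_mono fun t => ?_
    by_cases h0 : 0 < t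
    · by_cases h1 : t < r
      · rw [indicator_of_mem (by exact h0), indicator_of_mem (by exact ⟨h0, h1⟩), ← ENNReal.ofReal_mul (by positivity)]
        apply ENNReal.ofReal_le_ofReal
        refine mul_le_mul_of_nonneg_left (Real.rpow_le_rpow (abs_nonneg _) ?_ (by linarith)) (by positivity)
        exact (hvu t h1.le).trans (le_abs_self _)
      · rw [indicator_of_mem (by exact h0), z0 _ (hmem t (((hr1.le).trans (not_lt.1 h1)).trans (le_abs_self _)))]
        simp [Real.zero_rpow p0]
    · rw [indicator_of_notMem (by exact h0)]; simp
  have L3 := (L1.trans_lt hθ).trans_le (mul_le_mul_right L2 _)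
  rw [← ENNReal.ofReal_mul hΛ.le] at L3
  refine (ENNReal.ofReal_lt_ofReal_iff_of_nonneg ?_).1 L3
  apply intervalIntegral.integral_nonneg hr.le
  intro t ht
  have := g0 t
  have := ht.1
  positivity

lemma prof_of_v {N : ℕ} (hN : 2 ≤ N) (p r : ℝ) (hp : 1 < p) (hr : 0 < r) : ∃ C : ℝ, 0 < C ∧
    ∀ (Λ : ℝ) (_ : 0 < Λ)
    (c : EE N) (v : EE N → ℝ) (_ : ContDiff ℝ (⊤ : ℕ∞) v) (_ : HasCompactSupport v)
    (_ : tsupport v ⊆ ball c r)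
    (_ : (∫ x in ball c r, ‖fderiv ℝ v x‖ ^ p) < Λ * ∫ x in ball c r, |v x| ^ p),
    C ≤ Λ ∧ ∃ φ γ, Prof N p r Λ φ γ := by
  obtain ⟨C, hC, h⟩ := hardy N hN p r hp hr
  refine ⟨1 / C, by positivity, fun Λ hΛ c v hv hc hs H => ?_⟩
  obtain ⟨g, gc, g0, r1, hr1, gz, H⟩ := oned_of_v hN p r Λ hp hr hΛ c v hv hc hs H
  refine ⟨?_, prof_of_1d N hN p r Λ hp hr hΛ g gc g0 r1 hr1 gz H⟩
  have h1 := h g gc g0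
  set F := (∫ t in (0:ℝ)..r, t^(N-1) * g t ^ p)
  have F0 : 0 ≤ F := by
    apply intervalIntegral.integral_nonneg hr.le
    intro t ht
    have := g0 t
    have := ht.1
    positivity
  have h2 : F < Λ * (C * F) := H.trans_le (mul_le_mul_of_nonneg_left h1 hΛ.le)
  rw [div_le_iff₀ hC]
  by_contra! hc
  nlinarith


lemma scale_set (N : ℕ) (hN : 2 ≤ N) (h : ℝ → ℝ) (hm : Measurable h) (b R : ℝ)
    (hb : 0 < b) :
    ∫⁻ t in Ioo 0 (b*R), ENNReal.ofReal (t^(N-1) * h t) =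
      ENNReal.ofReal (b^N) * ∫⁻ t in Ioo 0 R, ENNReal.ofReal (t^(N-1) * h (b*t)) := by
  rw [← lintegral_indicator measurableSet_Ioo, ← lintegral_indicator measurableSet_Ioo,
    lint_scale _ b hb (Measurable.indicator (by fun_prop) measurableSet_Ioo),
    ← lintegral_const_mul' _ _ ENNReal.ofReal_ne_top,
    ← lintegral_const_mul' _ _ ENNReal.ofReal_ne_top]
  congr 1
  ext t
  by_cases ht : t ∈ Ioo 0 R
  · rw [indicator_of_mem ht, indicator_of_mem (by
      exact ⟨mul_pos hb ht.1, mul_lt_mul_of_pos_left ht.2 hb⟩),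
      ← ENNReal.ofReal_mul hb.le, ← ENNReal.ofReal_mul (by positivity)]
    congr 1
    have : b^N = b * b^(N-1) := by rw [← pow_succ']; congr 1; omega
    rw [this, mul_pow]; ring
  · rw [indicator_of_notMem ht, indicator_of_notMem (by
      intro h
      exact ht ⟨pos_of_mul_pos_right h.1 hb.le, lt_of_mul_lt_mul_left h.2 hb.le⟩)]
    simp

lemma Prof.nn {N : ℕ} {p r Λ : ℝ} {φ γ : ℝ → ℝ} (P : Prof N p r Λ φ γ) (t : ℝ) : 0 ≤ φ t := by
  obtain ⟨r1, _, h⟩ := P.zero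
  have := P.anti (le_max_left t r1)
  rwa [h _ (le_max_right _ _)] at this

lemma Prof.cont {N : ℕ} {p r Λ : ℝ} {φ γ : ℝ → ℝ} (P : Prof N p r Λ φ γ) : Continuous φ := by
  obtain ⟨K, h⟩ := P.lip
  exact h.continuous

lemma Prof.scaled {N : ℕ} (hN : 2 ≤ N) {p r Λ : ℝ} {φ γ : ℝ → ℝ} (P : Prof N p r Λ φ γ)
    (b R : ℝ) (hb : 0 < b) :
    ∫⁻ t in Ioo 0 R, ENNReal.ofReal (t^(N-1) * γ (b*t) ^ p) ≤
    ENNReal.ofReal Λ * ∫⁻ t in Ioo 0 R, ENNReal.ofReal (t^(N-1) * φ (b*t) ^ p) := by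
  by_cases hR : 0 < R
  · have := P.ineq (b*R) (by positivity)
    have gm := P.gm
    have pm := P.cont.measurable
    rw [scale_set N hN (fun t => γ t ^ p) (by fun_prop) b R hb,
      scale_set N hN (fun t => φ t ^ p) (by fun_prop) b R hb, mul_left_comm] at this
    have hpos : 0 < b^N := by positivity
    exact (ENNReal.mul_le_mul_iff_right (by simpa using hpos) ENNReal.ofReal_ne_top).1 this
  · rw [Ioo_eq_empty hR]; simp

/-- comparison of masses -/
lemma Prof.mass {N : ℕ} (hN : 2 ≤ N) {p r Λ : ℝ} (hp : 1 < p) {φ γ : ℝ → ℝ} (P : Prof N p r Λ φ γ)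
    (s ρ0 A : ℝ) (hs : 0 < s) (hA : 2 ≤ A) (hA2 : 2 * r ≤ A * ρ0 * s) :
    ∫⁻ t in Ioi 0, ENNReal.ofReal (t^(N-1) * φ (s/2*t) ^ p) ≤
    ENNReal.ofReal (A^N) * ∫⁻ t in Ioo 0 ρ0, ENNReal.ofReal (t^(N-1) * φ (s*t) ^ p) := by
  have pm := P.cont.measurable
  have h1 : ∫⁻ t in Ioi 0, ENNReal.ofReal (t^(N-1) * φ (s/2*t) ^ p) =
      ∫⁻ t in Ioo 0 (A*ρ0), ENNReal.ofReal (t^(N-1) * φ (s/2*t) ^ p) := by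
    rw [← lintegral_indicator measurableSet_Ioo, ← lintegral_indicator measurableSet_Ioi]
    congr 1
    ext t
    by_cases h0 : 0 < t
    · by_cases h1 : t < A * ρ0
      · rw [indicator_of_mem (by exact h0), indicator_of_mem (by exact ⟨h0, h1⟩)]
      · rw [indicator_of_mem (by exact h0), indicator_of_notMem (by exact fun h => h1 h.2)]
        obtain ⟨r1, hr1, hz⟩ := P.zero
        rw [hz]
        · simp [Real.zero_rpow (by linarith : p ≠ 0)]
        · push Not at h1
          nlinarith
    · rw [indicator_of_notMem (by exact h0), indicator_of_notMem (by exact fun h => h0 h.1)]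
  rw [h1, scale_set N hN (fun t => φ (s/2*t) ^ p) (by fun_prop) A ρ0 (by linarith)]
  gcongr ENNReal.ofReal (A^N) * ?_
  refine setLIntegral_mono' measurableSet_Ioo fun t ht => ?_
  apply ENNReal.ofReal_le_ofReal
  have := ht.1
  refine mul_le_mul_of_nonneg_left (Real.rpow_le_rpow (P.nn _) (P.anti ?_) (by linarith)) (by positivity)
  have : 0 < s * t := by positivity
  nlinarith

lemma slice {N : ℕ} (Ω : Set (EE N)) (hΩo : IsOpen Ω)
    (hΩb : Bornology.IsBounded Ω) (hΩc : Convex ℝ Ω) (a : EE N) (ha : a ∈ closure Ω)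
    (θ : EE N) (hθ : ‖θ‖ = 1) : ∃ R : ℝ, ∀ t, 0 < t → (a + t • θ ∈ Ω ↔ t < R) := by
  by_cases hne : ∃ t : ℝ, 0 < t ∧ a + t • θ ∈ Ω
  · set I := {t : ℝ | 0 < t ∧ a + t • θ ∈ Ω}
    have hb : BddAbove I := by
      obtain ⟨D, hD⟩ := hΩb.subset_closedBall a
      refine ⟨D, fun t ht => ?_⟩
      have := hD ht.2
      simp [norm_smul, hθ] at this
      exact (le_abs_self t).trans this
    refine ⟨sSup I, fun t ht => ⟨fun h => ?_, fun h => ?_⟩⟩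
    · have ho : IsOpen ((fun t : ℝ => a + t • θ) ⁻¹' Ω) := hΩo.preimage (by fun_prop)
      obtain ⟨ε, hε, hball⟩ := Metric.isOpen_iff.1 ho t h
      have : t + ε/2 ∈ I := by
        refine ⟨by positivity, hball ?_⟩
        simp [abs_of_pos hε]; exact hε
      have := le_csSup hb this
      linarith
    · obtain ⟨t', ht', htt⟩ := exists_lt_of_lt_csSup (show I.Nonempty from hne) h
      have h1 := hΩc.openSegment_closure_interior_subset_interior ha (hΩo.interior_eq.symm ▸ ht'.2)
      rw [hΩo.interior_eq] at h1
      apply h1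
      refine ⟨1 - t/t', t/t', ?_, ?_, by ring, ?_⟩
      · have := ht'.1
        rw [sub_pos, div_lt_one this]; exact htt
      · exact div_pos ht ht'.1
      · rw [smul_add, smul_smul, div_mul_cancel₀ _ ht'.1.ne', ← add_assoc, ← add_smul]
        simp
  · push Not at hne
    exact ⟨0, fun t ht => ⟨fun h => absurd h (hne t ht), fun h => absurd h (not_lt.2 ht.le)⟩⟩

/-- the distorted radial function -/
noncomputable def psi {N : ℕ} (s : ℝ) (a e x : EE N) : ℝ := s * ((‖x - a‖ + inner ℝ e (x - a)) / 2)

noncomputable def etaf {N : ℕ} (a e x : EE N) : ℝ := (1 + inner ℝ e (x - a) / ‖x - a‖) / 2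

lemma psi_deriv {N : ℕ} (s : ℝ) (hs : 0 < s) (a e x : EE N) (he : ‖e‖ = 1) (hx : x ≠ a) :
    ∀ C, s * √(etaf a e x) < C → ∀ᶠ y in nhds x, |psi s a e y - psi s a e x| ≤ C * ‖y - x‖ := by
  intro C hC
  have hz : 0 < ‖x - a‖ := norm_pos_iff.2 (sub_ne_zero.2 hx)
  have d1 : HasFDerivAt (fun y : EE N => ‖y - a‖) (‖x - a‖⁻¹ • innerSL ℝ (x - a)) x := by
    have h1 : HasFDerivAt (fun y : EE N => y - a) (ContinuousLinearMap.id ℝ (EE N)) x :=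
      (hasFDerivAt_id x).sub_const a
    have h2 := (h1.norm_sq).sqrt (by positivity)
    simp only [Real.sqrt_sq (norm_nonneg _)] at h2
    refine h2.congr_fderiv ?_
    ext y
    simp
    field_simp
  have d2 : HasFDerivAt (fun y : EE N => inner ℝ e (y - a)) (innerSL ℝ e) x := by
    have h1 : HasFDerivAt (fun y : EE N => y - a) (ContinuousLinearMap.id ℝ (EE N)) x :=
      (hasFDerivAt_id x).sub_const a
    exact ((innerSL ℝ e).hasFDerivAt (x := x - a)).comp x h1
  have d3 : HasFDerivAt (psi s a e) (innerSL ℝ ((s/2) • (‖x - a‖⁻¹ • (x - a) + e))) x := by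
    have := ((d1.add d2).const_mul (s/2))
    have hf : psi s a e = fun y => s/2 * (((fun y : EE N => ‖y - a‖) + fun y : EE N => inner ℝ e (y - a)) y) := by
      funext y; simp [psi]; ring
    rw [hf]
    refine this.congr_fderiv ?_
    ext y; simp [inner_add_left, inner_smul_left]
  have hnorm : ‖innerSL ℝ ((s/2) • (‖x - a‖⁻¹ • (x - a) + e))‖ = s * √(etaf a e x) := by
    rw [innerSL_apply_norm, norm_smul, Real.norm_of_nonneg (by positivity)]
    have : ‖‖x - a‖⁻¹ • (x - a) + e‖ = 2 * √(etaf a e x) := by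
      have h4 : ‖‖x - a‖⁻¹ • (x - a) + e‖^2 = 4 * etaf a e x := by
        rw [norm_add_sq_real, norm_smul, he, inner_smul_left, etaf, norm_inv, norm_norm,
          inv_mul_cancel₀ hz.ne', real_inner_comm]
        simp
        ring
      have h5 : ‖‖x - a‖⁻¹ • (x - a) + e‖ = √(4 * etaf a e x) := by
        rw [← h4, Real.sqrt_sq (norm_nonneg _)]
      rw [h5, Real.sqrt_mul (by norm_num), show (4:ℝ) = 2^2 by norm_num, Real.sqrt_sq (by norm_num)]
    rw [this]; ring
  have h6 := d3.isLittleO.def (show 0 < C - s * √(etaf a e x) by linarith)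
  filter_upwards [h6] with y hy
  have h7 := (innerSL ℝ ((s/2) • (‖x - a‖⁻¹ • (x - a) + e))).le_opNorm (y - x)
  rw [hnorm] at h7
  have h8 := norm_sub_norm_le (psi s a e y - psi s a e x) ((innerSL ℝ ((s/2) • (‖x - a‖⁻¹ • (x - a) + e))) (y - x))
  rw [← Real.norm_eq_abs]
  linarith

lemma Prof.fderiv_le {N : ℕ} {p r Λ : ℝ} {φ γ : ℝ → ℝ} (P : Prof N p r Λ φ γ)
    (s : ℝ) (hs : 0 < s) (a e x : EE N) (he : ‖e‖ = 1) (hx : x ≠ a) :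
    ‖fderiv ℝ (fun y => φ (psi s a e y)) x‖ ≤ γ (psi s a e x) * (s * √(etaf a e x)) := by
  have g0 := P.gnn (psi s a e x)
  have e0 : 0 ≤ s * √(etaf a e x) := by positivity
  have hpc : Continuous (psi s a e) := by unfold psi; fun_prop
  have key : ∀ ε > 0, ‖fderiv ℝ (fun y => φ (psi s a e y)) x‖ ≤
      (γ (psi s a e x) + ε) * (s * √(etaf a e x) + ε) := by
    intro ε hε
    apply norm_fderiv_le_of_lip' ℝ (by positivity)
    filter_upwards [psi_deriv s hs a e x he hx _ (lt_add_of_pos_right _ hε),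
      hpc.continuousAt.eventually (P.loc _ _ (lt_add_of_pos_right _ hε))] with y h1 h2
    rw [Real.norm_eq_abs, mul_assoc]
    exact h2.trans (mul_le_mul_of_nonneg_left h1 (by positivity))
  have ht : Filter.Tendsto (fun ε : ℝ => (γ (psi s a e x) + ε) * (s * √(etaf a e x) + ε))
      (nhdsWithin 0 (Ioi 0)) (nhds ((γ (psi s a e x) + 0) * (s * √(etaf a e x) + 0))) := by
    have : Continuous (fun ε : ℝ => (γ (psi s a e x) + ε) * (s * √(etaf a e x) + ε)) := by fun_prop
    exact (this.tendsto 0).mono_left nhdsWithin_le_nhds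
  simp only [add_zero] at ht
  exact ge_of_tendsto ht (by filter_upwards [self_mem_nhdsWithin] with ε hε using key ε hε)


lemma slice_int {N : ℕ} (Ω : Set (EE N)) (a θ : EE N) (R : ℝ)
    (hR : ∀ t, 0 < t → (a + t • θ ∈ Ω ↔ t < R)) (g : EE N → ℝ) (k : ℝ → ℝ)
    (hk : ∀ t, 0 < t → g (a + t • θ) = k t) :
    ∫⁻ t in Ioi (0:ℝ), ENNReal.ofReal (t^(N-1)) *
      Ω.indicator (fun x => ENNReal.ofReal (g x)) (a + t • θ) =
    ∫⁻ t in Ioo 0 R, ENNReal.ofReal (t^(N-1) * k t) := by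
  rw [← lintegral_indicator measurableSet_Ioo, ← lintegral_indicator measurableSet_Ioi]
  congr 1
  ext t
  by_cases h0 : 0 < t
  · rw [indicator_of_mem (show t ∈ Ioi 0 from h0)]
    by_cases h1 : t < R
    · rw [indicator_of_mem ((hR t h0).2 h1), indicator_of_mem (show t ∈ Ioo 0 R from ⟨h0, h1⟩),
        ← ENNReal.ofReal_mul (by positivity), hk t h0]
    · rw [indicator_of_notMem (fun h => h1 ((hR t h0).1 h)),
        indicator_of_notMem (show t ∉ Ioo 0 R from fun h => h1 h.2), mul_zero]
  · rw [indicator_of_notMem (show t ∉ Ioi 0 from h0),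
      indicator_of_notMem (show t ∉ Ioo 0 R from fun h => h0 h.1)]

lemma psi_ray {N : ℕ} (s : ℝ) (a e θ : EE N) (hθ : ‖θ‖ = 1) (t : ℝ) (ht : 0 < t) :
    psi s a e (a + t • θ) = s * ((1 + inner ℝ e θ) / 2) * t := by
  simp [psi, norm_smul, hθ, abs_of_pos ht, inner_smul_right]; ring

lemma etaf_ray {N : ℕ} (a e θ : EE N) (hθ : ‖θ‖ = 1) (t : ℝ) (ht : 0 < t) :
    etaf a e (a + t • θ) = (1 + inner ℝ e θ) / 2 := by
  simp [etaf, norm_smul, hθ, abs_of_pos ht, inner_smul_right]; field_simp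

section
variable {N : ℕ} (p s : ℝ) (a e : EE N) (Ω : Set (EE N)) (φ γ : ℝ → ℝ)

/-- energy density -/
noncomputable def GG : EE N → ENNReal :=
  Ω.indicator (fun x => ENNReal.ofReal ((γ (psi s a e x) * (s * √(etaf a e x)))^p))
/-- mass density -/
noncomputable def FF : EE N → ENNReal :=
  Ω.indicator (fun x => ENNReal.ofReal ((φ (psi s a e x))^p))
/-- slice -/
noncomputable def SL (f : EE N → ENNReal) (θ : EE N) : ENNReal :=
  ∫⁻ t in Ioi (0:ℝ), ENNReal.ofReal (t^(N-1)) * f (a + t • θ)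
end

lemma slice_main {N : ℕ} (hN : 2 ≤ N) {p r Λ s : ℝ} (hp : 1 < p) (hs : 0 < s)
    (hΛ : 0 < Λ) {φ γ : ℝ → ℝ} (P : Prof N p r Λ φ γ)
    (Ω : Set (EE N)) (hΩo : IsOpen Ω)
    (hΩb : Bornology.IsBounded Ω) (hΩc : Convex ℝ Ω) (a : EE N) (ha : a ∈ closure Ω) (e : EE N)
    (he : ‖e‖ = 1) (hhalf : ∀ x ∈ Ω, 0 ≤ inner ℝ e (x - a)) (θ : EE N) (hθ : ‖θ‖ = 1) :
    SL a (GG p s a e Ω γ) θ ≤ ENNReal.ofReal (Λ * s^p) * 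
      (ENNReal.ofReal (((1 + inner ℝ e θ) / 2)^(p/2)) * SL a (FF p s a e Ω φ) θ) ∧ 
    SL a (FF p s a e Ω φ) θ ≤ ∫⁻ t in Ioi 0, ENNReal.ofReal (t^(N-1) * φ (s/2*t) ^ p) ∧
    (∀ ρ0 > 0, a + ρ0 • θ ∈ Ω → ∫⁻ t in Ioo 0 ρ0, ENNReal.ofReal (t^(N-1) * φ (s*t) ^ p) ≤
      SL a (FF p s a e Ω φ) θ) := by
  obtain ⟨R, hR⟩ := slice Ω hΩo hΩb hΩc a ha θ hθ
  set η := (1 + inner ℝ e θ) / 2 with hη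
  have hη1 : η ≤ 1 := by
    have := real_inner_le_norm e θ
    rw [he, hθ] at this
    rw [hη]; linarith
  have hF : SL a (FF p s a e Ω φ) θ = ∫⁻ t in Ioo 0 R, ENNReal.ofReal (t^(N-1) * φ (s*η*t)^p) := by
    apply slice_int _ _ _ _ hR
    intro t ht
    rw [psi_ray s a e θ hθ t ht]
  have hG : SL a (GG p s a e Ω γ) θ =
      ∫⁻ t in Ioo 0 R, ENNReal.ofReal (t^(N-1) * (γ (s*η*t) * (s * √η))^p) := by
    apply slice_int _ _ _ _ hR
    intro t ht
    rw [psi_ray s a e θ hθ t ht, etaf_ray a e θ hθ t ht]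
  by_cases h0 : 0 < R
  swap
  · rw [hF, hG, Ioo_eq_empty h0]
    simp only [Measure.restrict_empty, lintegral_zero_measure, zero_le, true_and]
    intro ρ0 h1 h2
    exact absurd (h1.trans ((hR _ h1).1 h2)) h0
  have hη0 : 1/2 ≤ η := by
    have := hhalf _ ((hR (R/2) (by linarith)).2 (by linarith))
    simp only [add_sub_cancel_left, inner_smul_right] at this
    have := nonneg_of_mul_nonneg_right this (by linarith)
    rw [hη]; linarith
  have hηp : 0 < η := by linarith
  refine ⟨?_, ?_, ?_⟩
  · have := P.scaled hN (s*η) R (by positivity)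
    rw [hF, hG]
    have h1 : ∀ t ∈ Ioo 0 R, ENNReal.ofReal (t^(N-1) * (γ (s*η*t) * (s * √η))^p) =
        ENNReal.ofReal (s^p * η^(p/2)) * ENNReal.ofReal (t^(N-1) * γ (s*η*t) ^ p) := by
      intro t ht
      rw [← ENNReal.ofReal_mul (by positivity), Real.mul_rpow (P.gnn _) (by positivity),
        Real.mul_rpow hs.le (by positivity), Real.sqrt_eq_rpow, ← Real.rpow_mul hηp.le]
      congr 1
      rw [show 1/2*p = p/2 by ring]; ring
    rw [setLIntegral_congr_fun measurableSet_Ioo h1, lintegral_const_mul' _ _ ENNReal.ofReal_ne_top]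
    refine (mul_le_mul_right this _).trans (le_of_eq ?_)
    rw [ENNReal.ofReal_mul hΛ.le, ENNReal.ofReal_mul (by positivity)]
    ring
  · rw [hF]
    refine (setLIntegral_mono' measurableSet_Ioo fun t ht => ?_).trans
      (lintegral_mono_set (fun t ht => ht.1))
    apply ENNReal.ofReal_le_ofReal
    have := ht.1
    refine mul_le_mul_of_nonneg_left (Real.rpow_le_rpow (P.nn _) (P.anti ?_) (by linarith)) (by positivity)
    have : 0 < s * t := by positivity
    nlinarith
  · intro ρ0 h1 h2
    rw [hF]
    refine (setLIntegral_mono' measurableSet_Ioo fun t ht => ?_).trans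
      (lintegral_mono_set (Ioo_subset_Ioo_right ((hR _ h1).1 h2).le))
    apply ENNReal.ofReal_le_ofReal
    have := ht.1
    refine mul_le_mul_of_nonneg_left (Real.rpow_le_rpow (P.nn _) (P.anti ?_) (by linarith)) (by positivity)
    have : 0 < s * t := by positivity
    nlinarith


lemma exists_perp {N : ℕ} (hN : 2 ≤ N) (e : EE N) : ∃ f : EE N, f ≠ 0 ∧ inner ℝ e f = 0 := by
  have h : (ℝ ∙ e)ᗮ ≠ ⊥ := by
    rw [Ne, Submodule.orthogonal_eq_bot_iff]
    intro h
    have h1 : Module.finrank ℝ (ℝ ∙ e) ≤ 1 := (finrank_span_le_card ({e} : Set (EE N))).trans (by simp)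
    rw [h, finrank_top, finrank_euclideanSpace, Fintype.card_fin] at h1
    omega
  obtain ⟨f, hf, h0⟩ := Submodule.exists_mem_ne_zero_of_ne_bot h
  exact ⟨f, h0, Submodule.mem_orthogonal_singleton_iff_inner_right.1 hf⟩

lemma exists_off {N : ℕ} (hN : 2 ≤ N) (Ω : Set (EE N)) (hΩo : IsOpen Ω) (hne : Ω.Nonempty)
    (a e : EE N) (he : ‖e‖ = 1) : ∃ y ∈ Ω, inner ℝ e (y - a) < ‖y - a‖ := by
  by_contra! hc
  obtain ⟨f, hf, hef⟩ := exists_perp hN e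
  obtain ⟨y, hy⟩ := hne
  have hc1 : Continuous (fun t : ℝ => y + t • f) := by fun_prop
  have hc2 : Continuous (fun t : ℝ => y - t • f) := by fun_prop
  have e1 : ∀ᶠ t in nhds (0:ℝ), y + t • f ∈ Ω :=
    hc1.continuousAt.eventually (by simpa using hΩo.mem_nhds hy)
  have e2 : ∀ᶠ t in nhds (0:ℝ), y - t • f ∈ Ω :=
    hc2.continuousAt.eventually (by simpa using hΩo.mem_nhds hy)
  obtain ⟨ε, hε, hb⟩ := Metric.eventually_nhds_iff.1 (e1.and e2)
  obtain ⟨h1, h2⟩ := hb (y := ε/2) (by simp [abs_of_pos hε]; exact hε)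
  have k1 := hc _ h1
  have k2 := hc _ h2
  have k0 := real_inner_le_norm e (y - a)
  set f' := (ε/2) • f with hf'
  have hf0 : inner ℝ e f' = 0 := by rw [hf', inner_smul_right, hef, mul_zero]
  have hfp : 0 < ‖f'‖ := by
    rw [hf', norm_pos_iff]; exact smul_ne_zero (by positivity) hf
  have q1 : y + f' - a = (y - a) + f' := by abel
  have q2 : y - f' - a = (y - a) - f' := by abel
  rw [q1, inner_add_right, hf0, add_zero] at k1
  rw [q2, inner_sub_right, hf0, sub_zero] at k2
  rw [he, one_mul] at k0
  have k3 := parallelogram_law_with_norm ℝ (y - a) f'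
  have := norm_nonneg (y - a + f')
  have := norm_nonneg (y - a - f')
  have m1 : ‖y - a + f'‖ ≤ ‖y - a‖ := k1.trans k0
  have m2 : ‖y - a - f'‖ ≤ ‖y - a‖ := k2.trans k0
  nlinarith

lemma cone_T {N : ℕ} (hN : 2 ≤ N) (Ω : Set (EE N)) (hΩo : IsOpen Ω) (hne : Ω.Nonempty)
    (a e : EE N) (he : ‖e‖ = 1) (hhalf : ∀ x ∈ Ω, 0 ≤ inner ℝ e (x - a)) :
    ∃ ρ0 : ℝ, 0 < ρ0 ∧ ∃ c1 : ℝ, c1 < 1 ∧ 0 ≤ c1 ∧ ∃ T : Set (sphere (0 : EE N) 1), IsOpen T ∧ T.Nonempty ∧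
      ∀ θ ∈ T, a + ρ0 • (θ : EE N) ∈ Ω ∧ inner ℝ e (θ : EE N) < c1 := by
  obtain ⟨y, hy, hlt⟩ := exists_off hN Ω hΩo hne a e he
  have h0 := hhalf y hy
  have hpos : 0 < ‖y - a‖ := h0.trans_lt hlt
  set θ1 : EE N := ‖y - a‖⁻¹ • (y - a) with hθ1
  have hn : ‖θ1‖ = 1 := by rw [hθ1, norm_smul, norm_inv, norm_norm, inv_mul_cancel₀ hpos.ne']
  have hi : inner ℝ e θ1 = inner ℝ e (y - a) / ‖y - a‖ := by
    rw [hθ1, inner_smul_right]; ring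
  have hi1 : inner ℝ e θ1 < 1 := by rw [hi, div_lt_one hpos]; exact hlt
  have hi0 : 0 ≤ inner ℝ e θ1 := by rw [hi]; positivity
  refine ⟨‖y - a‖, hpos, (1 + inner ℝ e θ1) / 2, by linarith, by linarith,
    {θ | a + ‖y - a‖ • (θ : EE N) ∈ Ω ∧ inner ℝ e (θ : EE N) < (1 + inner ℝ e θ1) / 2}, ?_, ?_, ?_⟩
  · apply IsOpen.inter
    · have hcont : Continuous (fun θ : sphere (0 : EE N) 1 => a + ‖y - a‖ • (θ : EE N)) := by
        fun_prop
      exact hΩo.preimage hcont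
    · have hcont : Continuous (fun θ : sphere (0 : EE N) 1 => inner ℝ e (θ : EE N)) := by
        fun_prop
      exact isOpen_lt hcont continuous_const
  · refine ⟨⟨θ1, by simpa using hn⟩, ?_, ?_⟩
    · show a + ‖y - a‖ • θ1 ∈ Ω
      rw [hθ1, smul_smul, mul_inv_cancel₀ hpos.ne']
      simpa using hy
    · show inner ℝ e θ1 < _
      linarith
  · intro θ hθ; exact hθ

lemma GG_meas {N : ℕ} {p r Λ : ℝ} {φ γ : ℝ → ℝ} (P : Prof N p r Λ φ γ) (s : ℝ) (a e : EE N)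
    (Ω : Set (EE N)) (hΩ : IsOpen Ω) : Measurable (GG p s a e Ω γ) := by
  have := P.gm
  unfold GG psi etaf
  exact Measurable.indicator (by fun_prop) hΩ.measurableSet

lemma FF_meas {N : ℕ} {p r Λ : ℝ} {φ γ : ℝ → ℝ} (P : Prof N p r Λ φ γ) (s : ℝ) (a e : EE N)
    (Ω : Set (EE N)) (hΩ : IsOpen Ω) : Measurable (FF p s a e Ω φ) := by
  have := P.cont.measurable
  unfold FF psi
  exact Measurable.indicator (by fun_prop) hΩ.measurableSet

lemma polar_a {N : ℕ} (hN : 2 ≤ N) (a : EE N) (f : EE N → ENNReal) (hf : Measurable f) :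
    ∫⁻ x, f x = ∫⁻ θ : sphere (0 : EE N) 1, SL a f (θ : EE N) ∂(volume : Measure (EE N)).toSphere := by
  rw [← lintegral_add_left_eq_self f a, polar hN _ (by fun_prop)]
  rfl

lemma cone_est {N : ℕ} (hN : 2 ≤ N) {p r s : ℝ} (hp : 1 < p) (hs : 0 < s) (hr : 0 < r)
    (Ω : Set (EE N)) (hΩo : IsOpen Ω) (hne : Ω.Nonempty)
    (hΩb : Bornology.IsBounded Ω) (hΩc : Convex ℝ Ω) (a : EE N) (ha : a ∈ closure Ω) (e : EE N)
    (he : ‖e‖ = 1) (hhalf : ∀ x ∈ Ω, 0 ≤ inner ℝ e (x - a)) :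
    ∃ δ > 0, ∀ Λ > 0, ∀ φ γ : ℝ → ℝ, Prof N p r Λ φ γ →
      (∫⁻ x in Ω, ENNReal.ofReal (‖fderiv ℝ (fun y => φ (psi s a e y)) x‖ ^ p)) +
        ENNReal.ofReal (Λ * s^p) * (ENNReal.ofReal δ *
          ∫⁻ x in Ω, ENNReal.ofReal (φ (psi s a e x) ^ p)) ≤
      ENNReal.ofReal (Λ * s^p) * ∫⁻ x in Ω, ENNReal.ofReal (φ (psi s a e x) ^ p) := by
  obtain ⟨ρ0, hρ0, c1, hc1, hc0, T, hTo, hTne, hT⟩ := cone_T hN Ω hΩo hne a e he hhalf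
  have : Nonempty (Fin N) := ⟨⟨0, by omega⟩⟩
  have : Nontrivial (EE N) := by
    obtain ⟨f, hf, _⟩ := exists_perp hN (0 : EE N)
    exact ⟨f, 0, hf⟩
  set σ := (volume : Measure (EE N)).toSphere with hσ
  have hTpos : 0 < σ T := hTo.measure_pos σ hTne
  have hTfin : σ T ≠ ⊤ := measure_ne_top σ T
  have hSfin : σ univ ≠ ⊤ := measure_ne_top σ univ
  have hSpos : 0 < σ univ := hTpos.trans_le (measure_mono (subset_univ _))
  set A := max 2 (2 * r / (ρ0 * s)) with hA
  have hA2 : 2 ≤ A := le_max_left _ _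
  have hA3 : 2 * r ≤ A * ρ0 * s := by
    have := le_max_right 2 (2 * r / (ρ0 * s))
    rw [← hA, div_le_iff₀ (by positivity)] at this
    linarith
  set δ0 := 1 - ((1 + c1)/2)^(p/2) with hδ0
  have hδ0p : 0 < δ0 := by
    have := Real.rpow_lt_one (show 0 ≤ (1+c1)/2 by linarith) (by linarith) (show 0 < p/2 by linarith)
    linarith
  have hσT : 0 < (σ T).toReal := ENNReal.toReal_pos hTpos.ne' hTfin
  have hσS : 0 < (σ univ).toReal := ENNReal.toReal_pos hSpos.ne' hSfin
  have hAp : 0 < A ^ N := by positivity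
  refine ⟨δ0 * (σ T).toReal / (A^N * (σ univ).toReal), by positivity, ?_⟩
  intro Λ hΛ φ γ P
  set δ := δ0 * (σ T).toReal / (A^N * (σ univ).toReal) with hδ
  have hδe : ENNReal.ofReal δ * (ENNReal.ofReal (A^N) * σ univ) = ENNReal.ofReal δ0 * σ T := by
    rw [← ENNReal.ofReal_toReal hTfin, ← ENNReal.ofReal_toReal hSfin,
      ← ENNReal.ofReal_mul hAp.le, ← ENNReal.ofReal_mul (by positivity),
      ← ENNReal.ofReal_mul hδ0p.le, hδ]
    congr 1
    field_simp
  set L := ENNReal.ofReal (Λ * s^p) with hL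
  have hM : ∫⁻ x in Ω, ENNReal.ofReal (φ (psi s a e x) ^ p) =
      ∫⁻ θ : sphere (0 : EE N) 1, SL a (FF p s a e Ω φ) (θ : EE N) ∂σ := by
    rw [← lintegral_indicator hΩo.measurableSet]
    exact polar_a hN a _ (FF_meas P s a e Ω hΩo)
  have hE : ∫⁻ x in Ω, ENNReal.ofReal (‖fderiv ℝ (fun y => φ (psi s a e y)) x‖ ^ p) ≤
      ∫⁻ θ : sphere (0 : EE N) 1, SL a (GG p s a e Ω γ) (θ : EE N) ∂σ := by
    rw [← polar_a hN a _ (GG_meas P s a e Ω hΩo), ← lintegral_indicator hΩo.measurableSet]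
    apply lintegral_mono_ae
    have : ∀ᵐ x : EE N, x ≠ a := by simp [ae_iff]
    filter_upwards [this] with x hx
    apply indicator_le_indicator
    apply ENNReal.ofReal_le_ofReal
    exact Real.rpow_le_rpow (norm_nonneg _) (P.fderiv_le s hs a e x he hx) (by linarith)
  rw [hM]
  set K := ∫⁻ t in Ioi 0, ENNReal.ofReal (t^(N-1) * φ (s/2*t) ^ p)
  set K1 := ∫⁻ t in Ioo 0 ρ0, ENNReal.ofReal (t^(N-1) * φ (s*t) ^ p)
  have hKK : K ≤ ENNReal.ofReal (A^N) * K1 := P.mass hN hp s ρ0 A hs hA2 hA3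
  have hsm := fun θ : sphere (0 : EE N) 1 =>
    slice_main hN hp hs hΛ P Ω hΩo hΩb hΩc a ha e he hhalf (θ : EE N) (by simpa using θ.2)
  have hMK : ∫⁻ θ : sphere (0 : EE N) 1, SL a (FF p s a e Ω φ) (θ : EE N) ∂σ ≤ K * σ univ := by
    rw [← lintegral_const]
    exact lintegral_mono fun θ => (hsm θ).2.1
  have hpt : ∀ θ : sphere (0 : EE N) 1, SL a (GG p s a e Ω γ) (θ : EE N) +
      T.indicator (fun _ => L * (ENNReal.ofReal δ0 * K1)) θ ≤ L * SL a (FF p s a e Ω φ) (θ : EE N) := by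
    intro θ
    obtain ⟨i1, i2, i3⟩ := hsm θ
    have hin : |inner ℝ e (θ : EE N)| ≤ 1 := by
      have := abs_real_inner_le_norm e (θ : EE N)
      rwa [he, show ‖(θ : EE N)‖ = 1 by simpa using θ.2, mul_one] at this
    have hin' := abs_le.1 hin
    by_cases hθ : θ ∈ T
    · obtain ⟨j1, j2⟩ := hT θ hθ
      have i3 := i3 ρ0 hρ0 j1
      rw [indicator_of_mem hθ]
      calc _ ≤ L * (ENNReal.ofReal (1 - δ0) * SL a (FF p s a e Ω φ) (θ : EE N)) +
            L * (ENNReal.ofReal δ0 * SL a (FF p s a e Ω φ) (θ : EE N)) := by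
            apply add_le_add
            · refine i1.trans ?_
              gcongr
              rw [hδ0, sub_sub_cancel]
              apply Real.rpow_le_rpow (by linarith) (by linarith) (by linarith)
            · gcongr
        _ = L * SL a (FF p s a e Ω φ) (θ : EE N) := by
            have : 0 ≤ 1 - δ0 := by
              rw [hδ0, sub_sub_cancel]
              have : 0 ≤ (1+c1)/2 := by linarith
              positivity
            rw [← mul_add, ← add_mul, ← ENNReal.ofReal_add this hδ0p.le]
            simp
    · rw [indicator_of_notMem hθ, add_zero]
      refine i1.trans ?_
      gcongr
      refine (mul_le_of_le_one_left (zero_le) ?_)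
      rw [ENNReal.ofReal_le_one]
      exact Real.rpow_le_one (by linarith) (by linarith) (by linarith)
  have hLt : L ≠ ⊤ := ENNReal.ofReal_ne_top
  calc _ ≤ ∫⁻ θ : sphere (0 : EE N) 1, SL a (GG p s a e Ω γ) (θ : EE N) ∂σ +
        L * (ENNReal.ofReal δ0 * K1) * σ T := by
        refine add_le_add hE ?_
        calc _ ≤ L * (ENNReal.ofReal δ * (ENNReal.ofReal (A^N) * K1 * σ univ)) := by
              gcongr
              exact hMK.trans (by gcongr)
          _ = L * (ENNReal.ofReal δ * (ENNReal.ofReal (A^N) * σ univ)) * K1 := by ring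
          _ = _ := by rw [hδe]; ring
        
    _ = ∫⁻ θ : sphere (0 : EE N) 1, SL a (GG p s a e Ω γ) (θ : EE N) +
      T.indicator (fun _ => L * (ENNReal.ofReal δ0 * K1)) θ ∂σ := by
        rw [lintegral_add_right _ (measurable_const.indicator hTo.measurableSet),
          lintegral_indicator hTo.measurableSet, setLIntegral_const]
    _ ≤ _ := by
        rw [← lintegral_const_mul' _ _ hLt]
        exact lintegral_mono hpt


lemma psi_cont {N : ℕ} (s : ℝ) (a e : EE N) : Continuous (psi s a e) := by unfold psi; fun_prop

lemma single {N : ℕ} {p r Λ : ℝ} {φ γ : ℝ → ℝ} (P : Prof N p r Λ φ γ)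
    (s : ℝ) (hs : 0 < s) (Ω : Set (EE N)) (hΩo : IsOpen Ω)
    (hΩb : Bornology.IsBounded Ω) (a : EE N) (ha : a ∈ closure Ω) (e : EE N) (he : ‖e‖ = 1) :
    (∃ K, LipschitzWith K (fun x => φ (psi s a e x))) ∧
    (∃ x ∈ Ω, 0 < φ (psi s a e x)) ∧
    (∀ q : ℝ, 0 < q → IntegrableOn (fun x => φ (psi s a e x) ^ q) Ω ∧
      0 < ∫ x in Ω, φ (psi s a e x) ^ q) := by
  have hc : Continuous (fun x => φ (psi s a e x)) := P.cont.comp (psi_cont s a e)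
  have hopen : IsOpen {x | 0 < φ (psi s a e x)} := isOpen_lt continuous_const hc
  have hex : ∃ x ∈ Ω, 0 < φ (psi s a e x) := by
    have hm : a ∈ {x | 0 < φ (psi s a e x)} := by simpa [psi] using P.pos
    obtain ⟨x, h1, h2⟩ := mem_closure_iff.1 ha _ hopen hm
    exact ⟨x, h2, h1⟩
  refine ⟨?_, hex, ?_⟩
  · obtain ⟨K, hK⟩ := P.lip
    have hpsi : LipschitzWith (Real.toNNReal s) (psi s a e) := by
      apply LipschitzWith.of_dist_le_mul
      intro x y
      rw [Real.dist_eq, Real.coe_toNNReal _ hs.le, dist_eq_norm]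
      have h1 : psi s a e x - psi s a e y =
          s * (((‖x - a‖ - ‖y - a‖) + inner ℝ e (x - y)) / 2) := by
        have : x - y = (x - a) - (y - a) := by abel
        rw [this, inner_sub_right]; unfold psi; ring
      have h2 := abs_norm_sub_norm_le (x - a) (y - a)
      rw [sub_sub_sub_cancel_right] at h2
      have h3 := abs_real_inner_le_norm e (x - y)
      rw [he, one_mul] at h3
      rw [h1, abs_mul, abs_of_pos hs]
      gcongr
      rw [abs_le] at *
      constructor <;> linarith [h2.1, h2.2, h3.1, h3.2]
    exact ⟨_, hK.comp hpsi⟩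
  · intro q hq
    have hc2 : Continuous (fun x => φ (psi s a e x) ^ q) := hc.rpow_const (fun _ => Or.inr hq.le)
    have hi : IntegrableOn (fun x => φ (psi s a e x) ^ q) Ω :=
      (hc2.continuousOn.integrableOn_compact hΩb.isCompact_closure).mono_set subset_closure
    refine ⟨hi, ?_⟩
    rw [setIntegral_pos_iff_support_of_nonneg_ae _ hi]
    · obtain ⟨x, hx, hx'⟩ := hex
      refine ((hopen.inter hΩo).measure_pos volume ⟨x, hx', hx⟩).trans_le (measure_mono ?_)
      intro y hy
      exact ⟨(Real.rpow_pos_of_pos hy.1 q).ne', hy.2⟩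
    · exact Filter.Eventually.of_forall fun x => Real.rpow_nonneg (P.nn _) _

/-- energy bound for a single bump, in terms of real integrals -/
lemma single_energy {N : ℕ} {p r Λ : ℝ} (hp : 1 < p) (hΛ : 0 < Λ) {φ γ : ℝ → ℝ} (P : Prof N p r Λ φ γ)
    (s : ℝ) (hs : 0 < s) (Ω : Set (EE N)) (hΩo : IsOpen Ω)
    (hΩb : Bornology.IsBounded Ω) (a : EE N) (ha : a ∈ closure Ω) (e : EE N) (he : ‖e‖ = 1)
    (δ : ℝ) (hδ : 0 < δ)
    (H : (∫⁻ x in Ω, ENNReal.ofReal (‖fderiv ℝ (fun y => φ (psi s a e y)) x‖ ^ p)) +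
        ENNReal.ofReal (Λ * s^p) * (ENNReal.ofReal δ *
          ∫⁻ x in Ω, ENNReal.ofReal (φ (psi s a e x) ^ p)) ≤
      ENNReal.ofReal (Λ * s^p) * ∫⁻ x in Ω, ENNReal.ofReal (φ (psi s a e x) ^ p)) :
    IntegrableOn (fun x => ‖fderiv ℝ (fun y => φ (psi s a e y)) x‖ ^ p) Ω ∧
    ∫ x in Ω, ‖fderiv ℝ (fun y => φ (psi s a e y)) x‖ ^ p ≤
      Λ * s^p * (1 - δ) * ∫ x in Ω, φ (psi s a e x) ^ p := by
  obtain ⟨hi, -⟩ := (single P s hs Ω hΩo hΩb a ha e he).2.2 p (by linarith)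
  have h1 : ENNReal.ofReal (∫ x in Ω, φ (psi s a e x) ^ p) =
      ∫⁻ x in Ω, ENNReal.ofReal (φ (psi s a e x) ^ p) :=
    ofReal_integral_eq_lintegral_ofReal hi
      (Filter.Eventually.of_forall fun x => Real.rpow_nonneg (P.nn _) _)
  set m := ∫ x in Ω, φ (psi s a e x) ^ p with hm
  have m0 : 0 ≤ m := integral_nonneg fun x => Real.rpow_nonneg (P.nn _) _
  have hL : 0 < Λ * s^p := by positivity
  rw [← h1, ← ENNReal.ofReal_mul hδ.le, ← ENNReal.ofReal_mul hL.le, ← ENNReal.ofReal_mul hL.le] at H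
  have hmeas : Measurable (fun x => ‖fderiv ℝ (fun y => φ (psi s a e y)) x‖ ^ p) := by
    have := measurable_fderiv ℝ (fun y => φ (psi s a e y))
    fun_prop
  have hfin : ∫⁻ x in Ω, ENNReal.ofReal (‖fderiv ℝ (fun y => φ (psi s a e y)) x‖ ^ p) ≠ ⊤ :=
    ((le_self_add.trans H).trans_lt ENNReal.ofReal_lt_top).ne
  have hn : ∀ x, 0 ≤ ‖fderiv ℝ (fun y => φ (psi s a e y)) x‖ ^ p := fun x => by positivity
  have hI : IntegrableOn (fun x => ‖fderiv ℝ (fun y => φ (psi s a e y)) x‖ ^ p) Ω :=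
    (lintegral_ofReal_ne_top_iff_integrable hmeas.aestronglyMeasurable
      (Filter.Eventually.of_forall hn)).1 hfin
  refine ⟨hI, ?_⟩
  rw [← ofReal_integral_eq_lintegral_ofReal hI (Filter.Eventually.of_forall hn),
    ← ENNReal.ofReal_add (integral_nonneg hn) (by positivity),
    ENNReal.ofReal_le_ofReal_iff (by positivity)] at H
  linarith


lemma fd_pos {N : ℕ} (u : EE N → ℝ) (x : EE N) (c p : ℝ) (hc : 0 ≤ c) :
    ‖fderiv ℝ (fun y => c * u y) x‖ ^ p = c^p * ‖fderiv ℝ u x‖ ^ p := by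
  have : fderiv ℝ (fun y => c * u y) x = c • fderiv ℝ u x := by
    have := congrFun (fderiv_const_smul_field (𝕜 := ℝ) (f := u) c) x
    exact this
  rw [this, norm_smul, Real.norm_of_nonneg hc, Real.mul_rpow hc (norm_nonneg _)]

lemma fd_neg {N : ℕ} (u : EE N → ℝ) (x : EE N) (c p : ℝ) (hc : 0 ≤ c) :
    ‖fderiv ℝ (fun y => - (c * u y)) x‖ ^ p = c^p * ‖fderiv ℝ u x‖ ^ p := by
  rw [← fd_pos u x c p hc]
  congr 1
  rw [← norm_neg, ← fderiv_fun_neg]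
  simp

lemma odd_pow (c u p : ℝ) (hp : 1 < p) (hc : 0 ≤ c) (hu : 0 ≤ u) :
    (c * u) ^ (p - 2) * (c * u) = c ^ (p-1) * u ^ (p-1) := by
  rw [← Real.mul_rpow hc hu]
  rcases (mul_nonneg hc hu).eq_or_lt with h | h
  · rw [← h, mul_zero, Real.zero_rpow (by linarith)]
  · rw [← Real.rpow_add_one h.ne']; congr 1; ring

/-- abstract two bump construction -/
lemma mu_le_of_two {N : ℕ} (p : ℝ) (hp : 1 < p) (Ω : Set (EE N))
    (u v : EE N → ℝ) (hu : ∃ K, LipschitzWith K u) (hv : ∃ K, LipschitzWith K v)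
    (u0 : ∀ x, 0 ≤ u x) (v0 : ∀ x, 0 ≤ v x)
    (hux : ∃ x ∈ Ω, 0 < u x)
    (hui : ∀ q : ℝ, 0 < q → IntegrableOn (fun x => u x ^ q) Ω ∧ 0 < ∫ x in Ω, u x ^ q)
    (hvi : ∀ q : ℝ, 0 < q → IntegrableOn (fun x => v x ^ q) Ω ∧ 0 < ∫ x in Ω, v x ^ q)
    (hdis : ∀ x, (∀ᶠ y in nhds x, u y = 0) ∨ (∀ᶠ y in nhds x, v y = 0))
    (D : ℝ)
    (hue : IntegrableOn (fun x => ‖fderiv ℝ u x‖ ^ p) Ω ∧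
      ∫ x in Ω, ‖fderiv ℝ u x‖ ^ p ≤ D * ∫ x in Ω, u x ^ p)
    (hve : IntegrableOn (fun x => ‖fderiv ℝ v x‖ ^ p) Ω ∧
      ∫ x in Ω, ‖fderiv ℝ v x‖ ^ p ≤ D * ∫ x in Ω, v x ^ p) :
    muPQ p p Ω ≤ D := by
  have hp0 : p ≠ 0 := by linarith
  have hp1 : 0 < p - 1 := by linarith
  obtain ⟨Iui, Iup⟩ := hui (p-1) hp1
  obtain ⟨Ivi, Ivp⟩ := hvi (p-1) hp1
  obtain ⟨mui, mup⟩ := hui p (by linarith)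
  obtain ⟨mvi, mvp⟩ := hvi p (by linarith)
  set a := (∫ x in Ω, v x ^ (p-1)) ^ (1/(p-1)) with ha
  set b := (∫ x in Ω, u x ^ (p-1)) ^ (1/(p-1)) with hb
  have a0 : 0 < a := by positivity
  have b0 : 0 < b := by positivity
  have hap : a ^ (p-1) = ∫ x in Ω, v x ^ (p-1) := by
    rw [ha, ← Real.rpow_mul Ivp.le, one_div_mul_cancel hp1.ne', Real.rpow_one]
  have hbp : b ^ (p-1) = ∫ x in Ω, u x ^ (p-1) := by
    rw [hb, ← Real.rpow_mul Iup.le, one_div_mul_cancel hp1.ne', Real.rpow_one]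
  set w : EE N → ℝ := fun x => a * u x - b * v x with hw
  have z0 : (0:ℝ)^p = 0 := Real.zero_rpow hp0
  have z1 : (0:ℝ)^(p-1) = 0 := Real.zero_rpow hp1.ne'
  have key : ∀ x, |w x|^p = a^p * u x ^ p + b^p * v x ^ p ∧
      |w x|^(p-2) * w x = a^(p-1) * u x ^ (p-1) - b^(p-1) * v x ^ (p-1) ∧
      ‖fderiv ℝ w x‖^p = a^p * ‖fderiv ℝ u x‖^p + b^p * ‖fderiv ℝ v x‖^p := by
    intro x
    rcases hdis x with h | h
    · have hx := h.self_of_nhds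
      have f1 : fderiv ℝ u x = 0 := by
        rw [Filter.EventuallyEq.fderiv_eq (show u =ᶠ[nhds x] fun _ => 0 from h)]
        simp
      have f2 : fderiv ℝ w x = fderiv ℝ (fun y => -(b * v y)) x := by
        apply Filter.EventuallyEq.fderiv_eq
        filter_upwards [h] with y hy
        simp [hw, hy]
      have f3 : w x = -(b * v x) := by simp [hw, hx]
      have bv : 0 ≤ b * v x := mul_nonneg b0.le (v0 x)
      refine ⟨?_, ?_, ?_⟩
      · rw [f3, hx, z0, abs_neg, abs_of_nonneg bv, Real.mul_rpow b0.le (v0 x)]; ring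
      · rw [f3, hx, z1, abs_neg, abs_of_nonneg bv, mul_neg, odd_pow b _ p hp b0.le (v0 x)]; ring
      · rw [f2, fd_neg _ _ _ _ b0.le, f1, norm_zero, z0]; ring
    · have hx := h.self_of_nhds
      have f1 : fderiv ℝ v x = 0 := by
        rw [Filter.EventuallyEq.fderiv_eq (show v =ᶠ[nhds x] fun _ => 0 from h)]
        simp
      have f2 : fderiv ℝ w x = fderiv ℝ (fun y => (a * u y)) x := by
        apply Filter.EventuallyEq.fderiv_eq
        filter_upwards [h] with y hy
        simp [hw, hy]
      have f3 : w x = (a * u x) := by simp [hw, hx]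
      have bv : 0 ≤ a * u x := mul_nonneg a0.le (u0 x)
      refine ⟨?_, ?_, ?_⟩
      · rw [f3, hx, z0, abs_of_nonneg bv, Real.mul_rpow a0.le (u0 x)]; ring
      · rw [f3, hx, z1, abs_of_nonneg bv, odd_pow a _ p hp a0.le (u0 x)]; ring
      · rw [f2, fd_pos _ _ _ _ a0.le, f1, norm_zero, z0]; ring
  have i1 : ∫ x in Ω, |w x|^p = a^p * (∫ x in Ω, u x ^ p) + b^p * ∫ x in Ω, v x ^ p := by
    simp_rw [fun x => (key x).1]
    rw [integral_add (mui.const_mul _) (mvi.const_mul _), integral_const_mul, integral_const_mul]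
  have i2 : ∫ x in Ω, |w x|^(p-2) * w x = 0 := by
    simp_rw [fun x => (key x).2.1]
    rw [integral_sub (Iui.const_mul _) (Ivi.const_mul _), integral_const_mul, integral_const_mul,
      hap, hbp]
    ring
  have i3 : ∫ x in Ω, ‖fderiv ℝ w x‖^p =
      a^p * (∫ x in Ω, ‖fderiv ℝ u x‖ ^ p) + b^p * ∫ x in Ω, ‖fderiv ℝ v x‖ ^ p := by
    simp_rw [fun x => (key x).2.2]
    rw [integral_add (hue.1.const_mul _) (hve.1.const_mul _), integral_const_mul, integral_const_mul]
  have hq : rayleighQuot p p Ω w ≤ D := by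
    rw [rayleighQuot, div_self hp0, Real.rpow_one, i1, i3, div_le_iff₀ (by positivity)]
    have ap : 0 ≤ a^p := by positivity
    have bp : 0 ≤ b^p := by positivity
    have := mul_le_mul_of_nonneg_left hue.2 ap
    have := mul_le_mul_of_nonneg_left hve.2 bp
    linarith
  refine (csInf_le ⟨0, ?_⟩ ?_).trans hq
  · rintro R ⟨f, K, -, -, -, rfl⟩
    unfold rayleighQuot
    have h1 : 0 ≤ ∫ x in Ω, ‖fderiv ℝ f x‖ ^ p := integral_nonneg fun x => by positivity
    have h2 : 0 ≤ ∫ x in Ω, |f x| ^ p := integral_nonneg fun x => by positivity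
    positivity
  · obtain ⟨K1, hK1⟩ := hu
    obtain ⟨K2, hK2⟩ := hv
    have L1 : LipschitzWith (Real.toNNReal a * K1 + Real.toNNReal b * K2) w := by
      apply LipschitzWith.of_dist_le_mul
      intro x y
      have e1 := hK1.dist_le_mul x y
      have e2 := hK2.dist_le_mul x y
      rw [Real.dist_eq] at *
      push_cast
      rw [Real.coe_toNNReal _ a0.le, Real.coe_toNNReal _ b0.le]
      have : w x - w y = a * (u x - u y) - b * (v x - v y) := by simp [hw]; ring
      rw [this]
      refine (abs_sub _ _).trans ?_
      rw [abs_mul, abs_mul, abs_of_pos a0, abs_of_pos b0]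
      have := mul_le_mul_of_nonneg_left e1 a0.le
      have := mul_le_mul_of_nonneg_left e2 b0.le
      linarith
    refine ⟨w, _, L1.lipschitzOnWith, ?_, i2, rfl⟩
    obtain ⟨x, hx, hpos⟩ := hux
    refine ⟨x, hx, ?_⟩
    have hvx : v x = 0 := by
      rcases hdis x with h | h
      · exact absurd h.self_of_nhds hpos.ne'
      · exact h.self_of_nhds
    simp only [hw, hvx, mul_zero, sub_zero]
    exact (mul_pos a0 hpos).ne'


lemma half {N : ℕ} (x0 x1 x : EE N) (ρ : ℝ) (hρ : 0 < ρ) (h : ‖x1 - x0‖ = 2 * ρ)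
    (hx : ‖x - x1‖ ≤ 2 * ρ) : 0 ≤ inner ℝ ((2*ρ)⁻¹ • (x1 - x0)) (x - x0) := by
  rw [real_inner_smul_left]
  have h1 := norm_sub_sq_real (x - x0) (x1 - x0)
  rw [sub_sub_sub_cancel_right, h, real_inner_comm] at h1
  have h2 : ‖x - x1‖^2 ≤ (2*ρ)^2 := by gcongr
  have h3 := sq_nonneg ‖x - x0‖
  have : 0 ≤ inner ℝ (x1 - x0) (x - x0) := by linarith
  positivity

lemma bump_zero {N : ℕ} {p r Λ : ℝ} {φ γ : ℝ → ℝ} (P : Prof N p r Λ φ γ) (r1 : ℝ)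
    (hz : ∀ t, r1 ≤ t → φ t = 0) (s : ℝ) (hs : 0 < s) (a e x : EE N) (he : ‖e‖ = 1)
    (h : r1 < s * inner ℝ e (x - a)) : ∀ᶠ y in nhds x, φ (psi s a e y) = 0 := by
  have hc : Continuous (fun y : EE N => s * inner ℝ e (y - a)) := by fun_prop
  filter_upwards [hc.continuousAt.eventually (lt_mem_nhds h)] with y hy
  apply hz
  have h1 := real_inner_le_norm e (y - a)
  rw [he, one_mul] at h1
  unfold psi
  have : s * inner ℝ e (y - a) ≤ s * ((‖y - a‖ + inner ℝ e (y - a)) / 2) := by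
    gcongr; linarith
  linarith

lemma mu_le {N : ℕ} (hN : 2 ≤ N) (p r ρ : ℝ) (hp : 1 < p) (hr : 0 < r) (hρ : 0 < ρ)
    (Ω : Set (EE N)) (hΩo : IsOpen Ω) (hne : Ω.Nonempty)
    (hΩb : Bornology.IsBounded Ω) (hΩc : Convex ℝ Ω)
    (x0 x1 : EE N) (h0 : x0 ∈ closure Ω) (h1 : x1 ∈ closure Ω) (hd : dist x0 x1 = 2 * ρ)
    (hm : ∀ x ∈ closure Ω, ∀ y ∈ closure Ω, dist x y ≤ 2 * ρ) :
    ∃ δ : ℝ, 0 < δ ∧ ∀ Λ > 0, ∀ φ γ : ℝ → ℝ, Prof N p r Λ φ γ →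
      muPQ p p Ω ≤ Λ * (r/ρ)^p * (1 - δ) := by
  have hs : 0 < r / ρ := by positivity
  set s := r / ρ with hsd
  have n0 : ‖x1 - x0‖ = 2 * ρ := by rw [← hd, dist_comm, dist_eq_norm]
  have n1 : ‖x0 - x1‖ = 2 * ρ := by rw [← hd, dist_eq_norm]
  set e0 := (2*ρ)⁻¹ • (x1 - x0) with he0
  set e1 := (2*ρ)⁻¹ • (x0 - x1) with he1
  have en0 : ‖e0‖ = 1 := by
    rw [he0, norm_smul, n0, Real.norm_of_nonneg (by positivity), inv_mul_cancel₀ (by positivity)]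
  have en1 : ‖e1‖ = 1 := by
    rw [he1, norm_smul, n1, Real.norm_of_nonneg (by positivity), inv_mul_cancel₀ (by positivity)]
  obtain ⟨δ0, hδ0, H0⟩ := cone_est hN hp hs hr Ω hΩo hne hΩb hΩc x0 h0 e0 en0
    (fun x hx => half x0 x1 x ρ hρ n0 (by
      rw [← dist_eq_norm]; exact hm x (subset_closure hx) x1 h1))
  obtain ⟨δ1, hδ1, H1⟩ := cone_est hN hp hs hr Ω hΩo hne hΩb hΩc x1 h1 e1 en1
    (fun x hx => half x1 x0 x ρ hρ n1 (by
      rw [← dist_eq_norm]; exact hm x (subset_closure hx) x0 h0))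
  refine ⟨min δ0 δ1, lt_min hδ0 hδ1, fun Λ hΛ φ γ P => ?_⟩
  obtain ⟨r1, hr1, hz⟩ := P.zero
  obtain ⟨s1, s2, s3⟩ := single P s hs Ω hΩo hΩb x0 h0 e0 en0
  obtain ⟨t1, t2, t3⟩ := single P s hs Ω hΩo hΩb x1 h1 e1 en1
  have E0 := single_energy hp hΛ P s hs Ω hΩo hΩb x0 h0 e0 en0 δ0 hδ0 (H0 Λ hΛ φ γ P)
  have E1 := single_energy hp hΛ P s hs Ω hΩo hΩb x1 h1 e1 en1 δ1 hδ1 (H1 Λ hΛ φ γ P)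
  have hL : 0 < Λ * s^p := by positivity
  apply mu_le_of_two p hp Ω (fun x => φ (psi s x0 e0 x)) (fun x => φ (psi s x1 e1 x)) s1 t1
    (fun x => P.nn _) (fun x => P.nn _) s2 s3 t3
  · intro x
    by_cases hx : r1 < s * inner ℝ e0 (x - x0)
    · exact Or.inl (bump_zero P r1 hz s hs x0 e0 x en0 hx)
    · right
      apply bump_zero P r1 hz s hs x1 e1 x en1
      have hneg : e1 = - e0 := by rw [he1, he0, ← smul_neg, neg_sub]
      have hsplit : inner ℝ e1 (x - x1) = 2 * ρ - inner ℝ e0 (x - x0) := by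
        have : x - x1 = (x - x0) - (x1 - x0) := by abel
        rw [hneg, inner_neg_left, this, inner_sub_right]
        have : inner ℝ e0 (x1 - x0) = 2 * ρ := by
          rw [he0, real_inner_smul_left, real_inner_self_eq_norm_sq, n0]; field_simp
        rw [this]; ring
      rw [hsplit]
      have : s * (2 * ρ) = 2 * r := by rw [hsd]; field_simp
      push Not at hx
      linarith [mul_sub s (2*ρ) (inner ℝ e0 (x - x0))]
  · refine ⟨E0.1, E0.2.trans ?_⟩
    have := (s3 p (by linarith)).2
    have := min_le_left δ0 δ1
    gcongr
  · refine ⟨E1.1, E1.2.trans ?_⟩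
    have := (t3 p (by linarith)).2
    have := min_le_right δ0 δ1
    gcongr

lemma vol_cmp {N : ℕ} (hN : 2 ≤ N) (p r ρ : ℝ) (hp : 1 < p) (hr : 0 < r) (hρ : 0 < ρ)
    (Ω : Set (EE N)) (hΩo : IsOpen Ω) (hne : Ω.Nonempty)
    (hm : ∀ x ∈ Ω, ∀ y ∈ Ω, dist x y ≤ 2 * ρ) (c : EE N) :
    (r/ρ)^p ≤ ((volume (ball c r)).toReal / (volume Ω).toReal) ^ (p / N) := by
  have hi := isodiametric hN Ω ρ hρ hΩo.measurableSet hm c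
  have hbfin : volume (ball c ρ) ≠ ⊤ := measure_ball_lt_top.ne
  have hOpos : 0 < (volume Ω).toReal :=
    ENNReal.toReal_pos (hΩo.measure_pos volume hne).ne' (hi.trans_lt measure_ball_lt_top).ne
  have hi' : (volume Ω).toReal ≤ (volume (ball c ρ)).toReal := ENNReal.toReal_mono hbfin hi
  have hb : (volume (ball c r)).toReal = (r/ρ)^N * (volume (ball c ρ)).toReal := by
    rw [Measure.addHaar_ball_of_pos _ _ hr, Measure.addHaar_ball_of_pos _ _ hρ, finrank_euclideanSpace,
      Fintype.card_fin, ENNReal.toReal_mul, ENNReal.toReal_mul, ENNReal.toReal_ofReal (by positivity),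
      ENNReal.toReal_ofReal (by positivity), div_pow]
    field_simp
  have hN0 : (N:ℝ) ≠ 0 := by positivity
  have h1 : (r/ρ)^p = ((r/ρ)^N) ^ (p/N) := by
    rw [← Real.rpow_natCast, ← Real.rpow_mul (by positivity)]
    congr 1; field_simp
  rw [h1]
  apply Real.rpow_le_rpow (by positivity) _ (by positivity)
  rw [hb, le_div_iff₀ hOpos]
  gcongr

lemma exists_off' {N : ℕ} (hN : 2 ≤ N) (Ω : Set (EE N)) (hΩo : IsOpen Ω) (hne : Ω.Nonempty)
    (a : EE N) : ∃ y ∈ Ω, y ≠ a := by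
  obtain ⟨f, hf, _⟩ := exists_perp hN (0 : EE N)
  obtain ⟨y, hy, h⟩ := exists_off hN Ω hΩo hne a (‖f‖⁻¹ • f) (by
    rw [norm_smul, norm_inv, norm_norm, inv_mul_cancel₀ (norm_ne_zero_iff.2 hf)])
  refine ⟨y, hy, ?_⟩
  rintro rfl
  simp at h

lemma diam_pts {N : ℕ} (hN : 2 ≤ N) (Ω : Set (EE N)) (hΩo : IsOpen Ω)
    (hΩb : Bornology.IsBounded Ω) (hΩne : Ω.Nonempty) :
    ∃ x0 x1 : EE N, x0 ∈ closure Ω ∧ x1 ∈ closure Ω ∧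
      (∀ x ∈ closure Ω, ∀ y ∈ closure Ω, dist x y ≤ dist x0 x1) ∧ 0 < dist x0 x1 := by
  have hK := hΩb.isCompact_closure
  have hf : ContinuousOn (fun z : EE N × EE N => dist z.1 z.2) (closure Ω ×ˢ closure Ω) :=
    continuous_dist.continuousOn
  have hex := IsCompact.exists_isMaxOn (hK.prod hK) (hΩne.closure.prod hΩne.closure) hf
  obtain ⟨z, hz, hmax⟩ := hex
  have h0 : z.1 ∈ closure Ω := hz.1
  have h1 : z.2 ∈ closure Ω := hz.2
  have hm0 : ∀ x ∈ closure Ω, ∀ y ∈ closure Ω, dist x y ≤ dist z.1 z.2 := by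
    intro x hx y hy
    have := isMaxOn_iff.1 hmax (x, y) (mk_mem_prod hx hy)
    exact this
  clear hmax hf
  obtain ⟨x0, x1⟩ := z
  have hm' : ∀ x ∈ closure Ω, ∀ y ∈ closure Ω, dist x y ≤ dist x0 x1 := hm0
  have h0 : x0 ∈ closure Ω := h0
  have h1 : x1 ∈ closure Ω := h1
  have hdpos : 0 < dist x0 x1 := by
    by_contra hcon
    have hsub : Ω ⊆ {x0} := fun x hx => by
      have := hm' x (subset_closure hx) x0 h0
      exact mem_singleton_iff.2 (dist_le_zero.1 (this.trans (not_lt.1 hcon)))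
    obtain ⟨y, hy, hlt⟩ := exists_off' hN Ω hΩo hΩne x0
    exact hlt (hsub hy)
  exact ⟨x0, x1, h0, h1, hm', hdpos⟩

lemma v_mass {N : ℕ} (p : ℝ) (hp : 1 < p) (c : EE N) (r : ℝ) (v : EE N → ℝ) (hv1 : Continuous v)
    (x : EE N) (hx : x ∈ ball c r) (hvx : v x ≠ 0) : 0 < ∫ x in ball c r, |v x| ^ p := by
    have hcont : Continuous (fun x => |v x| ^ p) :=
      (hv1.abs).rpow_const (fun _ => Or.inr (by linarith))
    have hmass : 0 < ∫ x in ball c r, |v x| ^ p := by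
      have hi : IntegrableOn (fun x => |v x| ^ p) (ball c r) :=
        (hcont.continuousOn.integrableOn_compact (isCompact_closedBall c r)).mono_set
          ball_subset_closedBall
      rw [setIntegral_pos_iff_support_of_nonneg_ae _ hi]
      · have hop : IsOpen ({x | v x ≠ 0} ∩ ball c r) :=
          (isOpen_ne_fun hv1 continuous_const).inter isOpen_ball
        refine (hop.measure_pos volume ⟨x, hvx, hx⟩).trans_le (measure_mono ?_)
        intro y hy
        exact ⟨(Real.rpow_pos_of_pos (abs_pos.2 hy.1) p).ne', hy.2⟩
      · exact Filter.Eventually.of_forall fun x => Real.rpow_nonneg (abs_nonneg _) _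
    exact hmass

lemma lam_ne {N : ℕ} (p : ℝ) (c : EE N) (r : ℝ) (hr : 0 < r) :
    { R : ℝ | ∃ v : EuclideanSpace ℝ (Fin N) → ℝ,
    ContDiff ℝ (⊤ : ℕ∞) v ∧ HasCompactSupport v ∧ tsupport v ⊆ ball c r ∧
    (∃ x ∈ ball c r, v x ≠ 0) ∧ R = rayleighQuot p p (ball c r) v }.Nonempty := by
      let f : ContDiffBump c := ⟨r/4, r/2, by positivity, by linarith⟩
      refine ⟨_, f, f.contDiff, f.hasCompactSupport, ?_, ⟨c, mem_ball_self hr, ?_⟩, rfl⟩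
      · rw [f.tsupport_eq]; exact closedBall_subset_ball (by show r/2 < r; linarith)
      · rw [f.one_of_mem_closedBall (mem_closedBall_self (by show 0 ≤ r/4; linarith))]
        exact one_ne_zero

/-- Corollary 3.2. For every open bounded convex set `Ω ⊂ ℝ^N` and
every open ball `B ⊂ ℝ^N`, `μ_p(Ω) < λ_p(B) · (|B|/|Ω|)^(p/N)`. -/
theorem muP_lt_lambdaP_ball_volume {N : ℕ} (hN : 2 ≤ N) (p : ℝ) (hp : 1 < p)
    (Ω : Set (EuclideanSpace ℝ (Fin N))) (hΩo : IsOpen Ω)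
    (hΩb : Bornology.IsBounded Ω) (hΩc : Convex ℝ Ω) (hΩne : Ω.Nonempty)
    (c : EuclideanSpace ℝ (Fin N)) (r : ℝ) (hr : 0 < r) :
    muPQ p p Ω < lambdaPQ p p (ball c r) *
      ((volume (ball c r)).toReal / (volume Ω).toReal) ^ (p / N) := by
  obtain ⟨x0, x1, h0, h1, hm', hdpos⟩ := diam_pts hN Ω hΩo hΩb hΩne
  set ρ := dist x0 x1 / 2 with hρd
  have hρ : 0 < ρ := by positivity
  have hd : dist x0 x1 = 2 * ρ := by rw [hρd]; ring
  rw [hd] at hm'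
  obtain ⟨δ, hδ, Hmu⟩ := mu_le hN p r ρ hp hr hρ Ω hΩo hΩne hΩb hΩc x0 x1 h0 h1 hd hm'
  have hvol := vol_cmp hN p r ρ hp hr hρ Ω hΩo hΩne
    (fun x hx y hy => hm' x (subset_closure hx) y (subset_closure hy)) c
  obtain ⟨C, hC, HC⟩ := prof_of_v (N := N) hN p r hp hr
  have hstep : ∀ Λ, lambdaPQ p p (ball c r) < Λ → C ≤ Λ ∧
      muPQ p p Ω ≤ Λ * (r/ρ)^p * (1 - δ) := by
    intro Λ hΛ
    obtain ⟨R, ⟨v, hv1, hv2, hv3, ⟨x, hx, hvx⟩, rfl⟩, hRΛ⟩ := exists_lt_of_csInf_lt (lam_ne p c r hr) hΛ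
    have hmass := v_mass p hp c r v hv1.continuous x hx hvx
    have hen : 0 ≤ ∫ x in ball c r, ‖fderiv ℝ v x‖ ^ p := integral_nonneg fun x => by positivity
    rw [rayleighQuot, div_self (by linarith), Real.rpow_one] at hRΛ
    have hΛp : 0 < Λ := (by positivity : (0:ℝ) ≤ _).trans_lt hRΛ
    rw [div_lt_iff₀ hmass] at hRΛ
    obtain ⟨k1, φ, γ, P⟩ := HC Λ hΛp c v hv1 hv2 hv3 hRΛ
    exact ⟨k1, Hmu Λ hΛp φ γ P⟩
  set lam := lambdaPQ p p (ball c r) with hlam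
  have hlC : C ≤ lam := le_of_forall_gt_imp_ge_of_dense fun Λ h => (hstep Λ h).1
  have hmu : muPQ p p Ω ≤ lam * (r/ρ)^p * (1 - δ) := by
    have ht : Filter.Tendsto (fun Λ : ℝ => Λ * (r/ρ)^p * (1 - δ)) (nhdsWithin lam (Ioi lam))
        (nhds (lam * (r/ρ)^p * (1 - δ))) := by
      have : Continuous (fun Λ : ℝ => Λ * (r/ρ)^p * (1 - δ)) := by fun_prop
      exact (this.tendsto lam).mono_left nhdsWithin_le_nhds
    exact ge_of_tendsto ht (by
      filter_upwards [self_mem_nhdsWithin] with Λ hΛ using (hstep Λ hΛ).2)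
  have hlp : 0 < lam := hC.trans_le hlC
  have hsp : 0 < (r/ρ)^p := by positivity
  calc _ ≤ lam * (r/ρ)^p * (1 - δ) := hmu
    _ < lam * (r/ρ)^p := by nlinarith [mul_pos hlp hsp]
    _ ≤ _ := by gcongr
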